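/- For every even integer k ≥ 2 and every integer t ≥ 4, every coloring of the edges of the complete graph on 2(t − 1)·5^{(k−2)/2} + 1 vertices using k colors contains either a rainbow triangle or a monochromatic copy of P_t^+. Together with the matching lower-bound construction, this shows gr_k(K_3 : P_t^+) = 2(t − 1)·5^{(k−2)/2} + 1 for even k. -/

import Mathlib

open SimpleGraph

/-- `S_t^+`: the star on `t` vertices (center `0`, leaves `1, …, t-1`)
together with one extra edge between the leaves `1` and `2`, forming a triangle. -/
def starPlus (t : ℕ) : SimpleGraph (Fin t) :=
  SimpleGraph.fromRel (fun a b => a.val = 0 ∨ (a.val = 1 ∧ b.val = 2))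

/-- `P_t^+`: the path on `t` vertices `0, 1, …, t-1` (in order) together with
the extra edge between `0` and `2`, forming a triangle at one end. -/
def pathPlus (t : ℕ) : SimpleGraph (Fin t) :=
  SimpleGraph.fromRel (fun a b => b.val = a.val + 1 ∨ (a.val = 0 ∧ b.val = 2))

/-- An edge-coloring `c` of the complete graph on `V` contains a copy of `H`
in color `col`: an injective map of the vertices of `H` into `V` sending every
edge of `H` to a pair colored `col`. -/
def HasCopyIn {V C α : Type*} (c : Sym2 V → C) (col : C) (H : SimpleGraph α) : Prop :=
  ∃ f : α → V, Function.Injective f ∧ ∀ a b : α, H.Adj a b → c s(f a, f b) = col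

/-- An edge-coloring `c` of the complete graph on `V` contains a monochromatic copy of `H`. -/
def HasMonoCopy {V C α : Type*} (c : Sym2 V → C) (H : SimpleGraph α) : Prop :=
  ∃ col : C, HasCopyIn c col H

/-- An edge-coloring `c` of the complete graph on `V` contains a rainbow triangle:
three vertices whose three pairwise edges get pairwise distinct colors. -/
def HasRainbowTriangle {V C : Type*} (c : Sym2 V → C) : Prop :=
  ∃ u v w : V, u ≠ v ∧ u ≠ w ∧ v ≠ w ∧
    c s(u, v) ≠ c s(u, w) ∧ c s(u, v) ≠ c s(v, w) ∧ c s(u, w) ≠ c s(v, w)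

/-- The `k`-color Gallai-Ramsey number `gr_k(K_3 : H)`: the least `n` such that every
`k`-coloring of the edges of `K_n` contains a rainbow triangle or a monochromatic copy of `H`. -/
noncomputable def grK3 (k : ℕ) {α : Type*} (H : SimpleGraph α) : ℕ :=
  sInf {n : ℕ | ∀ c : Sym2 (Fin n) → Fin k, HasRainbowTriangle c ∨ HasMonoCopy c H}

/-- The `2`-color Ramsey number `R(G, H)`: the least `n` such that every red/blue
(`0`/`1`) coloring of the edges of `K_n` contains a red copy of `G` or a blue copy of `H`. -/
noncomputable def ramsey2 {α β : Type*} (G : SimpleGraph α) (H : SimpleGraph β) : ℕ :=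
  sInf {n : ℕ | ∀ c : Sym2 (Fin n) → Fin 2, HasCopyIn c 0 G ∨ HasCopyIn c 1 H}

/-!
For the upper bound one proves more. To every color `i` belongs a number `b i`: if `b i > 0`, then
color `i` has no path on more than `t - 2 * b i` vertices, and the claim is that `∑ i, b i` may be
added to the number of vertices. If fewer than `t / 2` vertices are joined to all the others in
color `i`, deleting them increases `b i` by their number, so induction applies; if at least `t / 2`
vertices are, then color `i` disappears from both sides of the join. By Gallai's theorem there is a
partition of the vertices with only two colors `r`, `s` between its parts. If one part has at least
`t / 2` vertices, it is joined in this way to its neighbours of color `r` and to those of color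
`s`. If all parts are smaller, one of the colors `r`, `s` is so dense that a depth-first path
extended greedily inside a subgraph of large minimum degree is too long.

For the lower bound, take lexicographic products of a monochromatic `K_{t-1}` with the coloring of
`K_5` by two pentagons, and with a single edge if `k` is even.
-/

namespace GallaiRamsey

open scoped Classical Finset

section PathLists

variable {V : Type*} {G H : SimpleGraph V} {X Y : Finset V} {l l' : List V} {x y z : V} {m : ℕ}

/-- The list of vertices of a path of `G`, in order. -/
def IsPathList (G : SimpleGraph V) (l : List V) : Prop :=
  l.IsChain G.Adj ∧ l.Nodup

/-- The list of vertices of a path of `G` whose last three vertices span a triangle, that is, of a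
copy of `pathPlus l.length`, read from the free end. -/
def IsPathPlusList (G : SimpleGraph V) (l : List V) : Prop :=
  IsPathList G l ∧ ∃ x y z, [x, y, z] <:+ l ∧ G.Adj x z

theorem isPathList_nil : IsPathList G [] := ⟨.nil, .nil⟩

theorem isPathList_singleton (x : V) : IsPathList G [x] := ⟨.singleton x, List.nodup_singleton x⟩

theorem IsPathList.cons (hl : IsPathList G l) (hx : x ∉ l) (hadj : ∀ y ∈ l.head?, G.Adj x y) :
    IsPathList G (x :: l) :=
  ⟨List.isChain_cons.2 ⟨hadj, hl.1⟩, List.nodup_cons.2 ⟨hx, hl.2⟩⟩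

theorem IsPathList.of_suffix (hl : IsPathList G l) (h : l' <:+ l) : IsPathList G l' :=
  ⟨hl.1.suffix h, hl.2.sublist h.sublist⟩

theorem IsPathList.mono (hGH : G ≤ H) (hl : IsPathList G l) : IsPathList H l :=
  ⟨hl.1.imp fun _ _ h => hGH h, hl.2⟩

theorem IsPathPlusList.mono (hGH : G ≤ H) (hl : IsPathPlusList G l) : IsPathPlusList H l := by
  obtain ⟨hpath, x, y, z, hsuf, hxz⟩ := hl
  exact ⟨hpath.mono hGH, x, y, z, hsuf, hGH hxz⟩

theorem IsPathPlusList.of_suffix (hl : IsPathPlusList G l) (h : l <:+ l') (hl' : IsPathList G l') :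
    IsPathPlusList G l' := by
  obtain ⟨-, x, y, z, hsuf, hxz⟩ := hl
  exact ⟨hl', x, y, z, hsuf.trans h, hxz⟩

theorem isPathPlusList_triangle (hxy : G.Adj x y) (hyz : G.Adj y z) (hxz : G.Adj x z) :
    IsPathPlusList G [x, y, z] := by
  refine ⟨?_, x, y, z, List.suffix_rfl, hxz⟩
  simp [IsPathList, hxy, hyz, hxy.ne, hyz.ne, hxz.ne]

theorem IsPathPlusList.drop (hl : IsPathPlusList G l) (hm : m + 3 ≤ l.length) :
    IsPathPlusList G (l.drop m) := by
  obtain ⟨hpath, x, y, z, hsuf, hxz⟩ := hl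
  refine ⟨hpath.of_suffix (List.drop_suffix m l), x, y, z, ?_, hxz⟩
  exact List.suffix_of_suffix_length_le hsuf (List.drop_suffix m l)
    (by rw [List.length_drop, List.length_cons, List.length_cons, List.length_singleton]; omega)

theorem card_le_card_sdiff_add_length (X : Finset V) (l : List V) :
    #X ≤ #(X \ l.toFinset) + l.length := by
  have := Finset.le_card_sdiff l.toFinset X
  have := l.toFinset_card_le
  omega

theorem card_sdiff_toFinset_le_cons (X : Finset V) (x : V) (l : List V) :
    #(X \ l.toFinset) ≤ #(X \ (x :: l).toFinset) + 1 := by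
  rw [List.toFinset_cons, Finset.sdiff_insert]
  have := Finset.pred_card_le_card_erase (s := X \ l.toFinset) (a := x)
  omega

theorem IsPathList.exists_alternating_extension (hl : IsPathList G l)
    (hXY : G.IsCompleteBetween X Y) (hhead : ∀ x ∈ l.head?, x ∈ X)
    (hY : (m + 1) / 2 ≤ #(Y \ l.toFinset)) (hX : m / 2 ≤ #(X \ l.toFinset)) :
    ∃ l', l <:+ l' ∧ IsPathList G l' ∧ l'.length = l.length + m := by
  induction m generalizing X Y l with
  | zero => exact ⟨l, List.suffix_rfl, hl, rfl⟩
  | succ m ih =>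
    obtain ⟨y, hy⟩ : (Y \ l.toFinset).Nonempty := Finset.card_pos.1 (by omega)
    obtain ⟨hyY, hyl⟩ : y ∈ Y ∧ y ∉ l := by simpa using hy
    have hyX : y ∉ X := fun h => (hXY h hyY).ne rfl
    have hX' : X \ (y :: l).toFinset = X \ l.toFinset := by
      rw [List.toFinset_cons, Finset.sdiff_insert, Finset.erase_eq_of_notMem (by simp [hyX])]
    have hYcard := card_sdiff_toFinset_le_cons Y y l
    obtain ⟨l', hsuf, hl', hlen⟩ := ih (l := y :: l)
      (hl.cons hyl fun x hx => (hXY (hhead x hx) hyY).symm) hXY.symm (by simpa using hyY)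
      (by rw [hX']; omega) (by omega)
    exact ⟨l', (List.suffix_cons y l).trans hsuf, hl', by
      rw [hlen, List.length_cons]
      omega⟩

theorem IsPathList.exists_clique_extension (hl : IsPathList G l) (hX : G.IsClique X)
    (hhead : ∀ x ∈ l.head?, x ∈ X) (hm : m ≤ #(X \ l.toFinset)) :
    ∃ l', l <:+ l' ∧ IsPathList G l' ∧ l'.length = l.length + m := by
  induction m generalizing l with
  | zero => exact ⟨l, List.suffix_rfl, hl, rfl⟩
  | succ m ih =>
    obtain ⟨y, hy⟩ : (X \ l.toFinset).Nonempty := Finset.card_pos.1 (by omega)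
    obtain ⟨hyX, hyl⟩ : y ∈ X ∧ y ∉ l := by simpa using hy
    have hcard := card_sdiff_toFinset_le_cons X y l
    have hadj : ∀ x ∈ l.head?, G.Adj y x := fun x hx =>
      hX hyX (hhead x hx) fun h => hyl (h ▸ List.mem_of_mem_head? hx)
    obtain ⟨l', hsuf, hl', hlen⟩ := ih (hl.cons hyl hadj) (by simpa using hyX) (by omega)
    exact ⟨l', (List.suffix_cons y l).trans hsuf, hl', by
      rw [hlen, List.length_cons]
      omega⟩

theorem IsPathList.exists_extension_of_le_degree {S : Finset V} {d : ℕ}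
    (hS : ∀ x ∈ S, d ≤ #{y ∈ S | G.Adj x y}) (hl : IsPathList G (x :: l)) (hx : x ∈ S) :
    ∃ l', x :: l <:+ l' ∧ IsPathList G l' ∧ d + 1 ≤ l'.length := by
  induction h : d - l.length generalizing x l with
  | zero => exact ⟨x :: l, List.suffix_rfl, hl, by rw [List.length_cons]; omega⟩
  | succ m ih =>
    obtain ⟨y, hy, hyl⟩ : ∃ y ∈ ({y ∈ S | G.Adj x y} : Finset V), y ∉ l.toFinset := by
      apply Finset.exists_mem_notMem_of_card_lt_card
      have := l.toFinset_card_le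
      have := hS x hx
      omega
    obtain ⟨hyS, hxy⟩ := Finset.mem_filter.1 hy
    obtain ⟨l', hsuf, hl', hlen⟩ := ih (x := y) (l := x :: l)
      (hl.cons (by simpa [hxy.ne'] using hyl) (by simpa using hxy.symm)) hyS
      (by rw [List.length_cons]; omega)
    exact ⟨l', (List.suffix_cons y _).trans hsuf, hl', hlen⟩

theorem exists_isPathList_of_isCompleteBetween (hXY : G.IsCompleteBetween X Y)
    (hX : (m + 1) / 2 ≤ #X) (hY : m / 2 ≤ #Y) : ∃ l, IsPathList G l ∧ l.length = m := by
  obtain ⟨l, -, hl, hlen⟩ := (isPathList_nil (G := G)).exists_alternating_extension hXY.symm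
    (m := m) (by simp) (by simpa using hX) (by simpa using hY)
  exact ⟨l, hl, by simpa using hlen⟩

theorem exists_isPathPlusList_of_isCompleteBetween {x₁ x₂ : V} {t : ℕ}
    (hXY : G.IsCompleteBetween X Y) (hx₁ : x₁ ∈ X) (hx₂ : x₂ ∈ X) (hadj : G.Adj x₁ x₂)
    (ht : 3 ≤ t) (hX : (t + 1) / 2 ≤ #X) (hY : t / 2 ≤ #Y) :
    ∃ l, IsPathPlusList G l ∧ l.length = t := by
  obtain ⟨y, hy⟩ : Y.Nonempty := Finset.card_pos.1 (by omega)
  have htri : IsPathPlusList G [x₂, y, x₁] :=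
    isPathPlusList_triangle (hXY hx₂ hy) (hXY hx₁ hy).symm hadj.symm
  have hyX : y ∉ X := fun h => (hXY h hy).ne rfl
  have hX' : X \ [x₂, y, x₁].toFinset = (X.erase x₁).erase x₂ := by
    grind [List.mem_toFinset]
  have hY' : Y \ [x₂, y, x₁].toFinset = Y.erase y := by
    have hx₁Y : x₁ ∉ Y := fun h => (hXY hx₁ h).ne rfl
    have hx₂Y : x₂ ∉ Y := fun h => (hXY hx₂ h).ne rfl
    grind [List.mem_toFinset]
  obtain ⟨l, hsuf, hl, hlen⟩ := htri.1.exists_alternating_extension hXY (m := t - 3)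
    (by simpa using hx₂)
    (by rw [hY', Finset.card_erase_of_mem hy]; omega)
    (by rw [hX', Finset.card_erase_of_mem (by simp [hx₂, hadj.ne']),
      Finset.card_erase_of_mem hx₁]; omega)
  exact ⟨l, htri.of_suffix hsuf hl, by
    simp only [List.length_cons, List.length_nil] at hlen
    omega⟩

theorem exists_isPathPlusList_of_isClique (hX : G.IsClique X) (hcard : 3 ≤ #X) :
    ∃ l, IsPathPlusList G l ∧ l.length = #X := by
  obtain ⟨x, y, z, hx, hy, hz, hxy, hxz, hyz⟩ := Finset.two_lt_card_iff.1 hcard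
  have htri : IsPathPlusList G [x, y, z] :=
    isPathPlusList_triangle (hX hx hy hxy) (hX hy hz hyz) (hX hx hz hxz)
  have hle := card_le_card_sdiff_add_length X [x, y, z]
  simp only [List.length_cons, List.length_nil] at hle
  obtain ⟨l, hsuf, hl, hlen⟩ := htri.1.exists_clique_extension hX (m := #X - 3)
    (by simpa using hx) (by omega)
  exact ⟨l, htri.of_suffix hsuf hl, by
    simp only [List.length_cons, List.length_nil] at hlen
    omega⟩

end PathLists

section DepthFirstSearch

variable {V : Type*} {G : SimpleGraph V} {W S F : Finset V} {l₀ p : List V} {m : ℕ}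

/-- The states of a depth-first search of `G` inside `W`, with roots in `S` hung on the path `l₀`:
`p` is the stack of active vertices on top of `l₀`, and `F` the set of finished vertices. -/
structure IsSearchState (G : SimpleGraph V) (W S : Finset V) (l₀ p : List V) (F : Finset V) :
    Prop where
  isPathList : IsPathList G p
  eq_or_rooted : p = l₀ ∨ ∃ y ∈ S, y :: l₀ <:+ p
  mem_or_mem : ∀ z ∈ p, z ∈ l₀ ∨ z ∈ W
  subset : F ⊆ W
  notMem : ∀ z ∈ p, z ∉ F
  mem_of_adj : ∀ x ∈ F, ∀ y ∈ W, G.Adj x y → y ∈ F ∨ y ∈ p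

theorem IsSearchState.push (h : IsSearchState G W S l₀ p F) {x : V} (hxW : x ∈ W) (hxF : x ∉ F)
    (hpath : IsPathList G (x :: p)) (hroot : ∃ y ∈ S, y :: l₀ <:+ x :: p) :
    IsSearchState G W S l₀ (x :: p) F where
  isPathList := hpath
  eq_or_rooted := .inr hroot
  mem_or_mem := by simpa [hxW] using h.mem_or_mem
  subset := h.subset
  notMem := by simpa [hxF] using h.notMem
  mem_of_adj u hu v hv huv := (h.mem_of_adj u hu v hv huv).imp_right (List.mem_cons_of_mem x)

theorem IsSearchState.pop {x : V} (h : IsSearchState G W S l₀ (x :: p) F) (hSW : S ⊆ W)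
    (hroot : ∃ y ∈ S, y :: l₀ <:+ x :: p) (hdone : ∀ y ∈ W, G.Adj x y → y ∈ F ∨ y ∈ x :: p) :
    IsSearchState G W S l₀ p (insert x F) := by
  have hxp : x ∉ p := (List.nodup_cons.1 h.isPathList.2).1
  obtain ⟨y, hyS, hy⟩ := hroot
  have hxW : x ∈ W := by
    rcases List.suffix_cons_iff.1 hy with heq | hsuf
    · exact (List.cons.inj heq).1 ▸ hSW hyS
    · refine (h.mem_or_mem x List.mem_cons_self).resolve_left fun hx => hxp ?_
      exact hsuf.subset (List.mem_cons_of_mem y hx)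
  refine ⟨h.isPathList.of_suffix (List.suffix_cons x p), ?_,
    fun z hz => h.mem_or_mem z (List.mem_cons_of_mem x hz),
    Finset.insert_subset hxW h.subset, fun z hz hzF => ?_, fun u hu v hv huv => ?_⟩
  · exact (List.suffix_cons_iff.1 hy).imp (fun heq => (List.cons.inj heq).2.symm)
      fun hsuf => ⟨y, hyS, hsuf⟩
  · rcases Finset.mem_insert.1 hzF with rfl | hzF
    · exact hxp hz
    · exact h.notMem z (List.mem_cons_of_mem x hz) hzF
  · have hv' : v ∈ F ∨ v ∈ x :: p := by
      rcases Finset.mem_insert.1 hu with rfl | hu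
      · exact hdone v hv huv
      · exact h.mem_of_adj u hu v hv huv
    simp only [List.mem_cons, Finset.mem_insert] at hv' ⊢
    tauto

theorem IsSearchState.exists_card_eq (h : IsSearchState G W S l₀ p F) (hFm : #F < m) (hSW : S ⊆ W)
    (hl₀ : ∀ z ∈ l₀, z ∉ W) (hS : ∀ y ∈ S, IsPathList G (y :: l₀))
    (hroot : ∀ F ⊆ W, (∀ x ∈ F, ∀ y ∈ W, G.Adj x y → y ∈ F) → #F < m → ∃ y ∈ S, y ∉ F) :
    ∃ x q X, IsSearchState G W S l₀ q X ∧ x ∈ X ∧ #X = m ∧ IsPathList G (x :: q) ∧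
      ∃ y ∈ S, y :: l₀ <:+ x :: q := by
  induction hN : 2 * #((W \ F) \ p.toFinset) + p.length using Nat.strong_induction_on
    generalizing p F with
  | _ N ih =>
  have push {x : V} (hxW : x ∈ W) (hxF : x ∉ F) (hpath : IsPathList G (x :: p))
      (hroot : ∃ y ∈ S, y :: l₀ <:+ x :: p) := by
    have hxp : x ∉ p := (List.nodup_cons.1 hpath.2).1
    refine ih _ ?_ (h.push hxW hxF hpath hroot) hFm rfl
    have hcard := Finset.card_erase_lt_of_mem (s := (W \ F) \ p.toFinset) (a := x)
      (by simp [hxW, hxF, hxp])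
    rw [← hN, List.toFinset_cons, Finset.sdiff_insert, List.length_cons]
    omega
  rcases h.eq_or_rooted with rfl | hrooted
  · obtain ⟨y, hyS, hyF⟩ := hroot F h.subset
      (fun x hx y hy hxy => (h.mem_of_adj x hx y hy hxy).resolve_right fun hyp => hl₀ y hyp hy) hFm
    exact push (hSW hyS) hyF (hS y hyS) ⟨y, hyS, List.suffix_rfl⟩
  obtain ⟨x, q, rfl⟩ : ∃ x q, p = x :: q := by
    obtain ⟨y, -, l, rfl⟩ := hrooted
    cases l <;> simp
  by_cases hnext : ∃ y ∈ W, G.Adj x y ∧ y ∉ F ∧ y ∉ x :: q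
  · obtain ⟨y, hyW, hxy, hyF, hyp⟩ := hnext
    obtain ⟨r, hrS, hr⟩ := hrooted
    exact push hyW hyF (h.isPathList.cons hyp (by simpa using hxy.symm))
      ⟨r, hrS, hr.trans (List.suffix_cons y _)⟩
  push Not at hnext
  have hpop := h.pop hSW hrooted fun y hyW hxy => or_iff_not_imp_left.2 (hnext y hyW hxy)
  have hxF : x ∉ F := h.notMem x List.mem_cons_self
  have hcard : #(insert x F) = #F + 1 := Finset.card_insert_of_notMem hxF
  by_cases hm : #F + 1 = m
  · exact ⟨x, q, insert x F, hpop, Finset.mem_insert_self x F, hcard.trans hm, h.isPathList,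
      hrooted⟩
  · refine ih _ ?_ hpop (by omega) rfl
    rw [← hN, List.toFinset_cons, Finset.sdiff_insert, Finset.sdiff_insert,
      Finset.erase_sdiff_comm, List.length_cons]
    omega

/-- The stack of a depth-first search separates the finished vertices from the unvisited ones; stop
when `m` vertices are finished. -/
theorem exists_isPathList_separating (hm : 0 < m) (hSW : S ⊆ W) (hl₀ : ∀ z ∈ l₀, z ∉ W)
    (hS : ∀ y ∈ S, IsPathList G (y :: l₀))
    (hroot : ∀ F ⊆ W, (∀ x ∈ F, ∀ y ∈ W, G.Adj x y → y ∈ F) → #F < m → ∃ y ∈ S, y ∉ F) :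
    ∃ x l X, IsPathList G (x :: l) ∧ (∃ y ∈ S, y :: l₀ <:+ x :: l) ∧ x ∈ X ∧ X ⊆ W ∧ #X = m ∧
      (∀ z ∈ l, z ∉ X) ∧ ∀ x ∈ X, ∀ y ∈ W, y ∉ X → y ∉ l → ¬ G.Adj x y := by
  obtain ⟨y₀, hy₀, -⟩ := hroot ∅ (by simp) (by simp) (by simpa using hm)
  have hstart : IsSearchState G W S l₀ l₀ ∅ :=
    ⟨(hS y₀ hy₀).of_suffix (List.suffix_cons y₀ l₀), .inl rfl, fun z hz => .inl hz, by simp,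
      by simp, by simp⟩
  obtain ⟨x, l, X, hstate, hxX, hcard, hxl, hrooted⟩ :=
    hstart.exists_card_eq (by simpa using hm) hSW hl₀ hS hroot
  refine ⟨x, l, X, hxl, hrooted, hxX, hstate.subset, hcard, hstate.notMem, ?_⟩
  intro u hu v hv hvX hvl huv
  exact (hstate.mem_of_adj u hu v hv huv).elim hvX hvl

end DepthFirstSearch

section Extremal

variable {V : Type*} {G : SimpleGraph V} {X A : Finset V} {l p : List V} {u v w x y z : V}

theorem IsPathPlusList.exists_cons_of_mem (hl : IsPathPlusList G l) (hv : v ∈ l) :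
    ∃ l', IsPathPlusList G (v :: l') := by
  obtain ⟨hpath, x, y, z, ⟨p, rfl⟩, hxz⟩ := hl
  have htri : IsPathList G [x, y, z] := hpath.of_suffix (List.suffix_append p _)
  have hxy : G.Adj x y := (List.isChain_cons_cons.1 htri.1).1
  have hyz : G.Adj y z := (List.isChain_cons_cons.1 (List.isChain_cons_cons.1 htri.1).2).1
  rcases List.mem_append.1 hv with hv | hv
  · obtain ⟨s, r, rfl⟩ := List.append_of_mem hv
    refine ⟨r ++ [x, y, z], hpath.of_suffix ⟨s, by simp⟩, x, y, z, ⟨v :: r, by simp⟩, hxz⟩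
  · simp only [List.mem_cons, List.not_mem_nil, or_false] at hv
    rcases hv with rfl | rfl | rfl
    · exact ⟨_, isPathPlusList_triangle hxy hyz hxz⟩
    · exact ⟨_, isPathPlusList_triangle hyz hxz.symm hxy.symm⟩
    · exact ⟨_, isPathPlusList_triangle hxz.symm hxy hyz.symm⟩

theorem exists_isPathPlusList_cons_of_reachable (hxy : G.Adj x y) (hyz : G.Adj y z)
    (hxz : G.Adj x z) (hv : G.Reachable x v) : ∃ l, IsPathPlusList G (v :: l) := by
  induction (reachable_iff_reflTransGen x v).1 hv with
  | refl => exact ⟨_, isPathPlusList_triangle hxy hyz hxz⟩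
  | @tail u v hxu huv ih =>
    obtain ⟨l, hl⟩ := ih ((reachable_iff_reflTransGen x u).2 hxu)
    by_cases hv : v ∈ u :: l
    · exact hl.exists_cons_of_mem hv
    · exact ⟨u :: l, hl.of_suffix (List.suffix_cons v _) (hl.1.cons hv (by simpa using huv.symm))⟩

theorem IsPathList.isPathPlusList_insert (hl : IsPathList G (p ++ [u, w])) (hz : z ∉ p ++ [u, w])
    (huz : G.Adj u z) (hzw : G.Adj z w) : IsPathPlusList G (p ++ [u, z, w]) := by
  obtain ⟨hpu, huw⟩ := List.isChain_append_cons_cons.1 hl.1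
  have hperm : (z :: (p ++ [u, w])).Perm (p ++ [u, z, w]) := by
    simpa using (List.perm_middle (a := z) (l₁ := p ++ [u]) (l₂ := [w])).symm
  refine ⟨⟨?_, hperm.nodup_iff.1 (List.nodup_cons.2 ⟨hz, hl.2⟩)⟩,
    u, z, w, List.suffix_append p _, huw.1⟩
  exact List.isChain_append_cons_cons.2 ⟨hpu, huz, List.isChain_pair.2 hzw⟩

theorem exists_isPathPlusList_of_multipartite {P : Type*} {t : ℕ} (ht : 3 ≤ t) (p : V → P)
    (hp : ∀ x ∈ X, ∀ y ∈ X, p x ≠ p y → G.Adj x y)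
    (hsmall : ∀ x ∈ X, #{y ∈ X | p y = p x} < (t + 1) / 2) (hX : (t - 1) + t / 2 ≤ #X) :
    ∃ l, IsPathPlusList G l ∧ l.length = t := by
  -- A smallest union of parts with at least `(t + 1) / 2` vertices has fewer than
  -- `t` vertices, and it meets two parts.
  let unions := {D ∈ X.powerset | (t + 1) / 2 ≤ #D ∧ ∀ x ∈ D, ∀ y ∈ X, p y = p x → y ∈ D}
  obtain ⟨D, hD, hmin⟩ := unions.exists_min_image Finset.card
    ⟨X, by simp only [unions, Finset.mem_filter, Finset.mem_powerset]; grind⟩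
  simp only [unions, Finset.mem_filter, Finset.mem_powerset] at hD hmin
  obtain ⟨hDX, hDcard, hDpart⟩ := hD
  obtain ⟨x, hx⟩ : D.Nonempty := Finset.card_pos.1 (by omega)
  have hsub : {y ∈ X | p y = p x} ⊆ D := fun y hy =>
    hDpart x hx y (Finset.mem_filter.1 hy).1 (Finset.mem_filter.1 hy).2
  have hcard := Finset.card_sdiff_add_card_eq_card hsub
  have hsmallx := hsmall x (hDX hx)
  have hrest : #(D \ {y ∈ X | p y = p x}) < (t + 1) / 2 := by
    by_contra! hle
    have := hmin (D \ {y ∈ X | p y = p x}) ⟨Finset.sdiff_subset.trans hDX, hle, by grind⟩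
    have : 0 < #{y ∈ X | p y = p x} := Finset.card_pos.2 ⟨x, by simp [hDX hx]⟩
    omega
  obtain ⟨y, hy⟩ : (D \ {y ∈ X | p y = p x}).Nonempty := Finset.card_pos.1 (by omega)
  obtain ⟨hyD, hyx⟩ : y ∈ D ∧ p y ≠ p x := by grind
  have hjoin : G.IsCompleteBetween D (X \ D : Finset V) := by
    intro u hu v hv
    obtain ⟨hvX, hvD⟩ := Finset.mem_sdiff.1 (Finset.mem_coe.1 hv)
    exact hp u (hDX hu) v hvX fun h => hvD (hDpart u hu v hvX h.symm)
  have := Finset.card_sdiff_add_card_eq_card hDX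
  exact exists_isPathPlusList_of_isCompleteBetween hjoin hx hyD
    (hp x (hDX hx) y (hDX hyD) hyx.symm) ht hDcard (by omega)

theorem sum_degree_le_sum_degree_erase (hx : x ∈ A) :
    ∑ y ∈ A, #{z ∈ A | G.Adj y z} ≤
      ∑ y ∈ A.erase x, #{z ∈ A.erase x | G.Adj y z} + 2 * #{z ∈ A | G.Adj x z} := by
  have hterm : ∀ y ∈ A.erase x,
      #{z ∈ A | G.Adj y z} ≤ #{z ∈ A.erase x | G.Adj y z} + if G.Adj x y then 1 else 0 := by
    intro y _
    rw [Finset.filter_erase]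
    split_ifs with hxy
    · exact Nat.sub_le_iff_le_add.1 Finset.pred_card_le_card_erase
    · rw [Finset.erase_eq_of_notMem (by simp [G.adj_comm y x, hxy]), add_zero]
  have hsum := Finset.sum_le_sum hterm
  have hcount : (∑ y ∈ A.erase x, if G.Adj x y then 1 else 0) ≤ #{z ∈ A | G.Adj x z} := by
    rw [← Finset.card_filter]
    exact Finset.card_le_card (Finset.filter_subset_filter _ (A.erase_subset x))
  rw [Finset.sum_add_distrib] at hsum
  rw [← Finset.add_sum_erase A _ hx]
  omega

theorem exists_subset_lt_degree {d : ℕ} (hd : 2 * d * #A < ∑ x ∈ A, #{y ∈ A | G.Adj x y}) :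
    ∃ S ⊆ A, S.Nonempty ∧ ∀ x ∈ S, d + 1 ≤ #{y ∈ S | G.Adj x y} := by
  induction A using Finset.strongInduction with
  | H A ih =>
    by_cases hall : ∀ x ∈ A, d + 1 ≤ #{y ∈ A | G.Adj x y}
    · refine ⟨A, subset_rfl, Finset.nonempty_iff_ne_empty.2 ?_, hall⟩
      rintro rfl
      simp at hd
    push Not at hall
    obtain ⟨x, hx, hdeg⟩ := hall
    have hsum := sum_degree_le_sum_degree_erase (G := G) hx
    have hcard : #A = #(A.erase x) + 1 := (Finset.card_erase_add_one hx).symm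
    obtain ⟨S, hS, hne, hSdeg⟩ := ih (A.erase x) (Finset.erase_ssubset hx) (by
      rw [hcard, mul_add] at hd
      omega)
    exact ⟨S, hS.trans (A.erase_subset x), hne, hSdeg⟩

end Extremal

section PathBounded

variable {V : Type*} {G H : SimpleGraph V} {X Y Z : Finset V} {l : List V} {t b : ℕ}

/-- `G` contains no `P_t^+`, and, if `b > 0`, not even a path on more than `t - 2 * b` vertices.
Each vertex removed from a coloring and joined to the rest in one color increases the number `b`
of that color by one; this keeps track of the removed vertices. -/
structure PathBounded (G : SimpleGraph V) (t b : ℕ) : Prop where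
  two_mul_lt : 2 * b < t
  length_lt : ∀ l, IsPathPlusList G l → l.length < t
  length_add_le : 0 < b → ∀ l, IsPathList G l → l.length + 2 * b ≤ t

theorem PathBounded.mono (hG : PathBounded G t b) (hHG : H ≤ G) : PathBounded H t b where
  two_mul_lt := hG.two_mul_lt
  length_lt l hl := hG.length_lt l (hl.mono hHG)
  length_add_le hb l hl := hG.length_add_le hb l (hl.mono hHG)

theorem PathBounded.not_adj_of_isCompleteBetween {x₁ x₂ : V} (hG : PathBounded G t b) (ht : 3 ≤ t)
    (hXY : G.IsCompleteBetween X Y) (hX : (t + 1) / 2 ≤ #X) (hY : t / 2 ≤ #Y) (hx₁ : x₁ ∈ X)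
    (hx₂ : x₂ ∈ X) : ¬ G.Adj x₁ x₂ := by
  intro hadj
  obtain ⟨l, hl, hlen⟩ := exists_isPathPlusList_of_isCompleteBetween hXY hx₁ hx₂ hadj ht hX hY
  exact (hG.length_lt l hl).ne hlen

theorem PathBounded.eq_zero_of_isCompleteBetween (hG : PathBounded G t b)
    (hXY : G.IsCompleteBetween X Y) (hX : (t + 1) / 2 ≤ #X) (hY : t / 2 ≤ #Y) : b = 0 := by
  by_contra hb
  obtain ⟨l, hl, hlen⟩ := exists_isPathList_of_isCompleteBetween hXY hX hY
  have := hG.length_add_le (Nat.pos_of_ne_zero hb) l hl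
  omega

theorem IsPathList.mem_of_two_le_length (hl : IsPathList H l) (hH : ∀ x y, H.Adj x y → x ∈ Y)
    (hlen : 2 ≤ l.length) {v : V} (hv : v ∈ l) : v ∈ Y := by
  induction l with
  | nil => simp at hv
  | cons x l ih =>
    obtain ⟨y, l, rfl⟩ := List.exists_cons_of_length_pos (l := l)
      (by rw [List.length_cons] at hlen; omega)
    have hxy : H.Adj x y := (List.isChain_cons_cons.1 hl.1).1
    rcases List.mem_cons.1 hv with rfl | hv
    · exact hH _ _ hxy
    rcases l with - | ⟨z, l⟩
    · rw [List.mem_singleton.1 hv]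
      exact hH _ _ hxy.symm
    · exact ih (hl.of_suffix (List.suffix_cons x _)) (by simp) hv

theorem IsPathList.exists_length_add_two_mul (hl : IsPathList G l)
    (hYZ : G.IsCompleteBetween Y Z) (hlY : ∀ v ∈ l, v ∈ Y) (hcard : #Z + l.length ≤ #Y) :
    ∃ l', IsPathList G l' ∧ l'.length = l.length + 2 * #Z := by
  have hZ : Z \ l.toFinset = Z := Finset.sdiff_eq_self_of_disjoint <| by
    simp only [Finset.disjoint_left, List.mem_toFinset]
    exact fun z hz hzl => (hYZ (hlY z hzl) hz).ne rfl
  have := card_le_card_sdiff_add_length Y l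
  obtain ⟨l', -, hl'⟩ := hl.exists_alternating_extension hYZ (m := 2 * #Z)
    (fun x hx => hlY x (List.mem_of_mem_head? hx)) (by rw [hZ]; omega) (by omega)
  exact ⟨l', hl'⟩

/-- Put one vertex of `Z` between the last two vertices of the path, then alternate in front. -/
theorem IsPathList.exists_isPathPlusList_length_add_two_mul (hl : IsPathList G l)
    (hlen : 2 ≤ l.length) (hYZ : G.IsCompleteBetween Y Z) (hlY : ∀ v ∈ l, v ∈ Y)
    (hZ : Z.Nonempty) (hcard : #Z + l.length ≤ #Y + 1) :
    ∃ l', IsPathPlusList G l' ∧ l'.length + 1 = l.length + 2 * #Z := by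
  obtain ⟨z, hz⟩ := hZ
  obtain ⟨q, w, rfl⟩ := (List.eq_nil_or_concat l).resolve_left (by rintro rfl; simp at hlen)
  obtain ⟨p, u, rfl⟩ := (List.eq_nil_or_concat q).resolve_left (by rintro rfl; simp at hlen)
  simp only [List.concat_eq_append, List.append_assoc, List.cons_append, List.nil_append]
    at hl hlY hcard ⊢
  have hZ' : ∀ v ∈ p ++ [u, w], v ∉ Z := fun v hv hvZ => (hYZ (hlY v hv) hvZ).ne rfl
  have hins := hl.isPathPlusList_insert (fun h => hZ' z h hz) (hYZ (hlY u (by simp)) hz)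
    (hYZ (hlY w (by simp)) hz).symm
  have hYsdiff : Y \ (p ++ [u, z, w]).toFinset = Y \ (p ++ [u, w]).toFinset := by
    have hzY : z ∉ Y := fun h => (hYZ h hz).ne rfl
    ext v
    by_cases hv : v = z <;> simp [hv, hzY]
  have hZsdiff : Z \ (p ++ [u, z, w]).toFinset = Z.erase z := by
    grind [List.mem_toFinset]
  have := card_le_card_sdiff_add_length Y (p ++ [u, w])
  have hpos : 0 < #Z := Finset.card_pos.2 ⟨z, hz⟩
  obtain ⟨l', hsuf, hl', hlen'⟩ := hins.1.exists_alternating_extension hYZ (m := 2 * (#Z - 1))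
    (fun x hx => hlY x (by cases p <;> simp_all))
    (by rw [hZsdiff, Finset.card_erase_of_mem hz]; omega) (by rw [hYsdiff]; omega)
  exact ⟨l', hins.of_suffix hsuf hl', by
    simp only [List.length_append, List.length_cons, List.length_nil] at hlen' ⊢
    omega⟩

theorem PathBounded.add_card_of_isCompleteBetween (hG : PathBounded G t b) (hHG : H ≤ G)
    (hH : ∀ x y, H.Adj x y → x ∈ Y) (hYZ : G.IsCompleteBetween Y Z) (hZ : 2 * #Z < t)
    (hcard : t ≤ #Y + #Z) : PathBounded H t (b + #Z) := by
  have hlt : 2 * (b + #Z) < t := by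
    rcases Nat.eq_zero_or_pos b with rfl | hb
    · omega
    obtain ⟨l, hl, hlen⟩ := exists_isPathList_of_isCompleteBetween hYZ (m := 2 * #Z + 1)
      (by omega) (by omega)
    have := hG.length_add_le hb l hl
    omega
  refine ⟨hlt, fun l hl => hG.length_lt l (hl.mono hHG), fun hpos l hl => ?_⟩
  by_contra! hlong
  let n := t + 1 - 2 * (b + #Z)
  obtain ⟨p, hp, hpn⟩ : ∃ p, IsPathList H p ∧ p.length = n :=
    ⟨l.drop (l.length - n), hl.of_suffix (List.drop_suffix _ l), by simp [n]; omega⟩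
  have hpY : ∀ v ∈ p, v ∈ Y := fun v hv => hp.mem_of_two_le_length hH (by omega) hv
  rcases Nat.eq_zero_or_pos b with rfl | hb
  · obtain ⟨l', hl', hlen'⟩ := (hp.mono hHG).exists_isPathPlusList_length_add_two_mul (by omega)
      hYZ hpY (Finset.card_pos.1 (by omega)) (by omega)
    have := hG.length_lt l' hl'
    omega
  · obtain ⟨l', hl', hlen'⟩ := (hp.mono hHG).exists_length_add_two_mul hYZ hpY (by omega)
    have := hG.length_add_le hb l' hl'
    omega

end PathBounded

section GallaiPartition

variable {V C : Type*} {c : Sym2 V → C} {A D : Finset V} {i j k r s : C} {d u v w x y z : V}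
  {q : V → V}

/-- The graph of the edges of color `i` inside `A`. -/
def colorGraph (c : Sym2 V → C) (A : Finset V) (i : C) : SimpleGraph V where
  Adj x y := x ≠ y ∧ x ∈ A ∧ y ∈ A ∧ c s(x, y) = i
  symm := ⟨fun x y h => ⟨h.1.symm, h.2.2.1, h.2.1, Sym2.eq_swap (a := x) (b := y) ▸ h.2.2.2⟩⟩

theorem colorGraph_adj : (colorGraph c A i).Adj x y ↔ x ≠ y ∧ x ∈ A ∧ y ∈ A ∧ c s(x, y) = i :=
  Iff.rfl

theorem colorGraph_mono (hDA : D ⊆ A) : colorGraph c D i ≤ colorGraph c A i :=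
  fun _ _ h => ⟨h.1, hDA h.2.1, hDA h.2.2.1, h.2.2.2⟩

theorem mem_of_reachable_of_closed {G : SimpleGraph V} (h : G.Reachable x y) {F : Finset V}
    (hF : ∀ a ∈ F, ∀ b, G.Adj a b → b ∈ F) (hx : x ∈ F) : y ∈ F := by
  induction (reachable_iff_reflTransGen x y).1 h with
  | refl => exact hx
  | tail hreach hadj ih => exact hF _ (ih ((reachable_iff_reflTransGen _ _).2 hreach)) _ hadj

theorem mem_of_reachable (h : (colorGraph c A i).Reachable x y) (hx : x ∈ A) : y ∈ A :=
  mem_of_reachable_of_closed h (fun _ _ _ hadj => hadj.2.2.1) hx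

theorem color_eq_of_not_hasRainbowTriangle (hG : ¬ HasRainbowTriangle c) (hxy : x ≠ y)
    (hxz : x ≠ z) (hyz : y ≠ z) (h₁ : c s(x, y) ≠ c s(x, z)) (h₂ : c s(x, y) ≠ c s(y, z)) :
    c s(x, z) = c s(y, z) := by
  by_contra h₃
  exact hG ⟨x, y, z, hxy, hxz, hyz, h₁, h₂, h₃⟩

theorem color_eq_of_reachable (hG : ¬ HasRainbowTriangle c)
    (huv : (colorGraph c A i).Reachable u v) (hu : u ∈ A) (hz : z ∈ A)
    (huz : ¬ (colorGraph c A i).Reachable u z) : c s(u, z) = c s(v, z) := by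
  rw [reachable_iff_reflTransGen] at huv
  induction huv with
  | refl => rfl
  | @tail v w huv hvw ih =>
    rw [← reachable_iff_reflTransGen] at huv
    have huw := huv.trans hvw.reachable
    have notAdj {a : V} (hua : (colorGraph c A i).Reachable u a) : a ≠ z ∧ i ≠ c s(a, z) := by
      refine ⟨fun h => huz (h ▸ hua), fun h => huz (hua.trans (Adj.reachable ?_))⟩
      exact ⟨fun h' => huz (h' ▸ hua), mem_of_reachable hua hu, hz, h.symm⟩
    obtain ⟨hvw_ne, -, -, rfl⟩ := hvw
    rw [ih]
    exact color_eq_of_not_hasRainbowTriangle hG hvw_ne (notAdj huv).1 (notAdj huw).1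
      (notAdj huv).2 (notAdj huw).2

/-- The edges of color `i` inside `A` connect `A`. -/
def ConnectedOn (c : Sym2 V → C) (A : Finset V) (i : C) : Prop :=
  ∀ x ∈ A, ∀ y ∈ A, (colorGraph c A i).Reachable x y

theorem ConnectedOn.exists_color_eq (h : ConnectedOn c A i) (hA : 2 ≤ #A) (hv : v ∈ A) :
    ∃ x ∈ A.erase v, c s(v, x) = i := by
  obtain ⟨w, hw, hwv⟩ := Finset.exists_mem_ne hA v
  obtain ⟨x, hvx, -⟩ := Relation.ReflTransGen.cases_head
    ((reachable_iff_reflTransGen v w).1 (h v hv w hw)) |>.resolve_left hwv.symm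
  exact ⟨x, Finset.mem_erase.2 ⟨hvx.1.symm, hvx.2.2.1⟩, hvx.2.2.2⟩

theorem ConnectedOn.exists_reachable_erase (h : ConnectedOn c A i) (hv : v ∈ A)
    (hx : x ∈ A.erase v) :
    ∃ d ∈ A.erase v, (colorGraph c (A.erase v) i).Reachable x d ∧ c s(v, d) = i := by
  have hxv := (reachable_iff_reflTransGen x v).1 (h x (Finset.mem_of_mem_erase hx) v hv)
  induction hxv using Relation.ReflTransGen.head_induction_on with
  | refl => simp at hx
  | @head x y hxy _ ih =>
    by_cases hyv : y = v
    · exact ⟨x, hx, .rfl, by rw [Sym2.eq_swap, ← hyv]; exact hxy.2.2.2⟩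
    · have hy : y ∈ A.erase v := Finset.mem_erase.2 ⟨hyv, hxy.2.2.1⟩
      obtain ⟨d, hd, hyd, hvd⟩ := ih hy
      exact ⟨d, hd, .trans (Adj.reachable ⟨hxy.1, hx, hy, hxy.2.2.2⟩) hyd, hvd⟩

theorem color_eq_of_not_reachable_erase (hG : ¬ HasRainbowTriangle c) (hx : x ∈ A.erase v)
    (hd : d ∈ A.erase v) (hxd : ¬ (colorGraph c (A.erase v) i).Reachable x d)
    (hvx : c s(v, x) ≠ i) (hvd : c s(v, d) = i) : c s(x, d) = c s(v, x) := by
  have hne : x ≠ d := fun h => hxd (h ▸ .rfl)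
  have hxd_color : c s(x, d) ≠ i := fun h => hxd (Adj.reachable ⟨hne, hx, hd, h⟩)
  have := color_eq_of_not_hasRainbowTriangle hG (x := d) (y := v) (z := x)
    (Finset.ne_of_mem_erase hd) hne.symm (Finset.ne_of_mem_erase hx).symm
  rw [Sym2.eq_swap (a := d) (b := v), hvd, Sym2.eq_swap (a := d) (b := x)] at this
  exact this hxd_color.symm hvx.symm

theorem ConnectedOn.erase (hG : ¬ HasRainbowTriangle c) (h : ConnectedOn c A i) (hv : v ∈ A)
    (hx : x ∈ A.erase v) (hy : y ∈ A.erase v) (hxi : c s(v, x) ≠ i) (hyi : c s(v, y) ≠ i)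
    (hxy : c s(v, x) ≠ c s(v, y)) : ConnectedOn c (A.erase v) i := by
  intro a ha b hb
  by_contra hab
  by_cases hxy_reach : (colorGraph c (A.erase v) i).Reachable x y
  · obtain ⟨z, hz, hxz⟩ : ∃ z ∈ A.erase v, ¬ (colorGraph c (A.erase v) i).Reachable x z := by
      by_contra! hall
      exact hab ((hall a ha).symm.trans (hall b hb))
    obtain ⟨d, hd, hzd, hvd⟩ := h.exists_reachable_erase hv hz
    have hxd := fun hxd : (colorGraph c (A.erase v) i).Reachable x d => hxz (hxd.trans hzd.symm)
    have hyd := fun hyd => hxd (hxy_reach.trans hyd)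
    apply hxy
    rw [← color_eq_of_not_reachable_erase hG hx hd hxd hxi hvd,
      ← color_eq_of_not_reachable_erase hG hy hd hyd hyi hvd]
    exact color_eq_of_reachable hG hxy_reach hx hd hxd
  · obtain ⟨d, hd, hxd, hvd⟩ := h.exists_reachable_erase hv hx
    obtain ⟨e, he, hye, hve⟩ := h.exists_reachable_erase hv hy
    have hxe := fun hxe : (colorGraph c (A.erase v) i).Reachable x e =>
      hxy_reach (hxe.trans hye.symm)
    have hyd := fun hyd : (colorGraph c (A.erase v) i).Reachable y d =>
      hxy_reach (hxd.trans hyd.symm)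
    apply hxy
    rw [← color_eq_of_not_reachable_erase hG hx he hxe hxi hve,
      ← color_eq_of_not_reachable_erase hG hy hd hyd hyi hvd, Sym2.eq_swap (a := x),
      Sym2.eq_swap (a := y), ← color_eq_of_reachable hG hye hy hx (mt .symm hxy_reach),
      ← color_eq_of_reachable hG hxd hx hy hxy_reach, Sym2.eq_swap]

theorem not_connectedOn_three_colors (hG : ¬ HasRainbowTriangle c) (hA : 2 ≤ #A) (hij : i ≠ j)
    (hik : i ≠ k) (hjk : j ≠ k) (hi : ConnectedOn c A i) (hj : ConnectedOn c A j) :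
    ¬ ConnectedOn c A k := by
  intro hk
  induction A using Finset.strongInduction with
  | H A ih =>
    obtain ⟨v, hv⟩ : A.Nonempty := Finset.card_pos.1 (by omega)
    obtain ⟨x, hx, rfl⟩ := hi.exists_color_eq hA hv
    obtain ⟨y, hy, rfl⟩ := hj.exists_color_eq hA hv
    obtain ⟨z, hz, rfl⟩ := hk.exists_color_eq hA hv
    have hcard : 2 ≤ #(A.erase v) :=
      Finset.one_lt_card.2 ⟨x, hx, y, hy, fun h => hij (h ▸ rfl)⟩
    exact ih _ (Finset.erase_ssubset hv) hcard (hi.erase hG hv hy hz hij.symm hik.symm hjk)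
      (hj.erase hG hv hx hz hij hjk.symm hik) (hk.erase hG hv hx hy hik hjk hij)

/-- A Gallai partition of `A`: at least two parts, the fibres of `q`, such that every edge between
two parts has the color of the edge between their representatives, which is `r` or `s`. -/
structure IsGallaiPartition (c : Sym2 V → C) (A : Finset V) (r s : C) (q : V → V) : Prop where
  exists_ne : ∃ x ∈ A, ∃ y ∈ A, q x ≠ q y
  color_eq : ∀ x ∈ A, ∀ y ∈ A, q x ≠ q y → c s(x, y) = c s(q x, q y)
  color_mem : ∀ x ∈ A, ∀ y ∈ A, q x ≠ q y → c s(x, y) = r ∨ c s(x, y) = s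

/-- The maps `q` grouping `A` into at least two parts that are joined homogeneously. -/
def IsHomogeneousMap (c : Sym2 V → C) (A : Finset V) (q : V → V) : Prop :=
  2 ≤ #(A.image q) ∧ ∀ x ∈ A, ∀ y ∈ A, q x ≠ q y → c s(x, y) = c s(q x, q y)

theorem IsHomogeneousMap.collapse (hq : IsHomogeneousMap c A q) {M : Finset V}
    (hM : M ⊂ A.image q) (hu : u ∈ M)
    (hmod : ∀ x ∈ M, ∀ z ∈ A.image q, z ∉ M → c s(u, z) = c s(x, z)) :
    IsHomogeneousMap c A fun x => if q x ∈ M then u else q x := by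
  constructor
  · obtain ⟨z, hz, hzM⟩ := Finset.exists_of_ssubset hM
    obtain ⟨a, ha, rfl⟩ := Finset.mem_image.1 hz
    obtain ⟨b, hb, rfl⟩ := Finset.mem_image.1 (hM.1 hu)
    refine Finset.one_lt_card.2 ⟨q b, Finset.mem_image.2 ⟨b, hb, by simp [hu]⟩, q a,
      Finset.mem_image.2 ⟨a, ha, by simp [hzM]⟩, fun h => hzM (h ▸ hu)⟩
  · intro x hx y hy hxy
    have hcolor : q x ≠ q y → c s(x, y) = c s(q x, q y) := hq.2 x hx y hy
    have hqx := Finset.mem_image_of_mem q hx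
    have hqy := Finset.mem_image_of_mem q hy
    dsimp only at hxy ⊢
    split_ifs at hxy ⊢ with hxM hyM hyM
    · exact absurd rfl hxy
    · rw [hcolor fun h => hyM (h ▸ hxM), hmod _ hxM _ hqy hyM]
    · rw [hcolor fun h => hxM (h ▸ hyM), Sym2.eq_swap, Sym2.eq_swap (b := u), hmod _ hyM _ hqx hxM]
    · exact hcolor hxy

/-- In a coarsest homogeneous grouping, a component of a color cannot be contracted. -/
theorem exists_isHomogeneousMap_connectedOn (hG : ¬ HasRainbowTriangle c) (hA : 2 ≤ #A) :
    ∃ q, IsHomogeneousMap c A q ∧ ∀ u ∈ A.image q, ∀ v ∈ A.image q, u ≠ v →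
      ConnectedOn c (A.image q) (c s(u, v)) := by
  obtain ⟨q, hq, hmin⟩ := exists_minimalFor_of_wellFoundedLT (IsHomogeneousMap c A)
    (fun q => #(A.image q)) ⟨id, by simpa [IsHomogeneousMap] using hA⟩
  refine ⟨q, hq, fun u hu v hv huv => ?_⟩
  let M : Finset V := {x ∈ A.image q | (colorGraph c (A.image q) (c s(u, v))).Reachable u x}
  have huM : u ∈ M := by simp only [M, Finset.mem_filter]; exact ⟨hu, .rfl⟩
  have hvM : v ∈ M := by
    simp only [M, Finset.mem_filter]
    exact ⟨hv, Adj.reachable ⟨huv, hu, hv, rfl⟩⟩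
  suffices hM : M = A.image q by
    intro x hx y hy
    rw [← hM] at hx hy
    exact (Finset.mem_filter.1 hx).2.symm.trans (Finset.mem_filter.1 hy).2
  by_contra hne
  have hM : M ⊂ A.image q := (Finset.filter_subset _ _).ssubset_of_ne hne
  have hcollapse := hq.collapse hM huM fun x hx z hz hzM =>
    color_eq_of_reachable hG (Finset.mem_filter.1 hx).2 hu hz
      fun h => hzM (Finset.mem_filter.2 ⟨hz, h⟩)
  have hsub : A.image (fun x => if q x ∈ M then u else q x) ⊆ (A.image q).erase v := by
    intro y hy
    obtain ⟨x, hx, rfl⟩ := Finset.mem_image.1 hy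
    split_ifs with hxM
    · exact Finset.mem_erase.2 ⟨huv, hu⟩
    · exact Finset.mem_erase.2 ⟨fun h => hxM (h ▸ hvM), Finset.mem_image_of_mem q hx⟩
  have hlt := (Finset.card_le_card hsub).trans_lt (Finset.card_erase_lt_of_mem hv)
  exact hlt.not_ge (hmin hcollapse hlt.le)

theorem exists_isGallaiPartition (hG : ¬ HasRainbowTriangle c) (hA : 2 ≤ #A) :
    ∃ r s q, IsGallaiPartition c A r s q := by
  obtain ⟨q, ⟨htwo, hcolor⟩, hconn⟩ := exists_isHomogeneousMap_connectedOn hG hA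
  have hconn' : ∀ x ∈ A, ∀ y ∈ A, q x ≠ q y → ConnectedOn c (A.image q) (c s(x, y)) := by
    intro x hx y hy hxy
    rw [hcolor x hx y hy hxy]
    exact hconn _ (Finset.mem_image_of_mem q hx) _ (Finset.mem_image_of_mem q hy) hxy
  have hne : ∃ x ∈ A, ∃ y ∈ A, q x ≠ q y := by
    obtain ⟨u, hu, v, hv, huv⟩ := Finset.one_lt_card.1 htwo
    obtain ⟨x, hx, rfl⟩ := Finset.mem_image.1 hu
    obtain ⟨y, hy, rfl⟩ := Finset.mem_image.1 hv
    exact ⟨x, hx, y, hy, huv⟩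
  obtain ⟨a, ha, b, hb, hab⟩ := hne
  by_cases hone : ∀ x ∈ A, ∀ y ∈ A, q x ≠ q y → c s(x, y) = c s(a, b)
  · exact ⟨c s(a, b), c s(a, b), q, ⟨a, ha, b, hb, hab⟩, hcolor,
      fun x hx y hy h => .inl (hone x hx y hy h)⟩
  push Not at hone
  obtain ⟨d, hd, e, he, hde, hcd⟩ := hone
  refine ⟨c s(a, b), c s(d, e), q, ⟨a, ha, b, hb, hab⟩, hcolor, fun x hx y hy hxy => ?_⟩
  by_contra! hthird
  exact not_connectedOn_three_colors hG htwo hcd.symm hthird.1.symm hthird.2.symm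
    (hconn' a ha b hb hab) (hconn' d hd e he hde) (hconn' x hx y hy hxy)

end GallaiPartition

section ExtremalOrder

variable {t k : ℕ}

/-- The largest number of vertices of a Gallai `k`-coloring without a monochromatic `P_t^+`, for
`k ≥ 1` and `t ≥ 4`; the value at `k = 0` has no meaning. -/
def extremalOrder (t k : ℕ) : ℕ :=
  if Even k then 2 * (t - 1) * 5 ^ ((k - 2) / 2) else (t - 1) * 5 ^ ((k - 1) / 2)

theorem extremalOrder_two_mul_add_one (t j : ℕ) :
    extremalOrder t (2 * j + 1) = (t - 1) * 5 ^ j := by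
  rw [extremalOrder, if_neg (Nat.not_even_two_mul_add_one j),
    show (2 * j + 1 - 1) / 2 = j by omega]

theorem extremalOrder_two_mul_add_two (t j : ℕ) :
    extremalOrder t (2 * j + 2) = 2 * (t - 1) * 5 ^ j := by
  rw [extremalOrder, if_pos ((even_two_mul j).add even_two),
    show (2 * j + 2 - 2) / 2 = j by omega]

theorem extremalOrder_one (t : ℕ) : extremalOrder t 1 = t - 1 := by
  simpa only [pow_zero, mul_one] using extremalOrder_two_mul_add_one t 0

theorem extremalOrder_two (t : ℕ) : extremalOrder t 2 = 2 * (t - 1) := by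
  simpa only [pow_zero, mul_one] using extremalOrder_two_mul_add_two t 0

theorem extremalOrder_add_two (hk : 1 ≤ k) :
    extremalOrder t (k + 2) = 5 * extremalOrder t k := by
  obtain ⟨j, rfl | rfl⟩ : ∃ j, k = 2 * j + 1 ∨ k = 2 * j + 2 := ⟨(k - 1) / 2, by omega⟩
  · rw [show 2 * j + 1 + 2 = 2 * (j + 1) + 1 by ring, extremalOrder_two_mul_add_one,
      extremalOrder_two_mul_add_one]
    ring
  · rw [show 2 * j + 2 + 2 = 2 * (j + 1) + 2 by ring, extremalOrder_two_mul_add_two,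
      extremalOrder_two_mul_add_two]
    ring

theorem two_mul_extremalOrder_le (hk : 1 ≤ k) :
    2 * extremalOrder t k ≤ extremalOrder t (k + 1) := by
  obtain ⟨j, rfl | rfl⟩ : ∃ j, k = 2 * j + 1 ∨ k = 2 * j + 2 := ⟨(k - 1) / 2, by omega⟩
  · rw [extremalOrder_two_mul_add_one, extremalOrder_two_mul_add_two, mul_assoc]
  · rw [show 2 * j + 2 + 1 = 2 * (j + 1) + 1 by ring, extremalOrder_two_mul_add_one,
      extremalOrder_two_mul_add_two, pow_succ]
    linarith [Nat.zero_le ((t - 1) * 5 ^ j)]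

theorem extremalOrder_add_le (hk : 1 ≤ k) :
    extremalOrder t (k + 1) + (t - 1) ≤ 3 * extremalOrder t k := by
  obtain ⟨j, rfl | rfl⟩ : ∃ j, k = 2 * j + 1 ∨ k = 2 * j + 2 := ⟨(k - 1) / 2, by omega⟩
  all_goals have hle : t - 1 ≤ (t - 1) * 5 ^ j := Nat.le_mul_of_pos_right _ (by positivity)
  · rw [extremalOrder_two_mul_add_one, extremalOrder_two_mul_add_two]
    linarith
  · rw [show 2 * j + 2 + 1 = 2 * (j + 1) + 1 by ring, extremalOrder_two_mul_add_one,
      extremalOrder_two_mul_add_two, pow_succ]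
    linarith

theorem le_extremalOrder (hk : 1 ≤ k) : t - 1 ≤ extremalOrder t k := by
  induction k, hk using Nat.le_induction with
  | base => rw [extremalOrder_one]
  | succ k hk ih =>
    have := two_mul_extremalOrder_le (t := t) hk
    omega

theorem mul_le_two_mul_extremalOrder (hk : 3 ≤ k) :
    (t - 1) * (k + 7) ≤ 2 * extremalOrder t k := by
  induction k, hk using Nat.le_induction with
  | base =>
    rw [extremalOrder_add_two le_rfl, extremalOrder_one]
    omega
  | succ k hk ih =>
    have := two_mul_extremalOrder_le (t := t) (k := k) (by omega)
    nlinarith [Nat.zero_le ((t - 1) * k)]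

end ExtremalOrder

section Admissible

variable {V C : Type*} {c : Sym2 V → C} {A D X Y Z : Finset V} {K : Finset C} {b : C → ℕ}
  {i j : C} {t : ℕ}

/-- No edge inside `A` has color `i`. -/
def IsFreeOf (c : Sym2 V → C) (A : Finset V) (i : C) : Prop :=
  ∀ x ∈ A, ∀ y ∈ A, x ≠ y → c s(x, y) ≠ i

/-- The hypothesis of the weighted form of the theorem: the colors used inside `A` belong to `K`,
and color `i ∈ K` satisfies the bounds of `PathBounded` with parameter `b i`. -/
structure IsAdmissible (t : ℕ) (c : Sym2 V → C) (A : Finset V) (K : Finset C) (b : C → ℕ) :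
    Prop where
  nonempty : K.Nonempty
  color_mem : ∀ x ∈ A, ∀ y ∈ A, x ≠ y → c s(x, y) ∈ K
  pathBounded : ∀ i ∈ K, PathBounded (colorGraph c A i) t (b i)

/-- The weighted form of the theorem for the vertex set `A`: every removed vertex recorded in `b`
may be counted along with the vertices of `A`. -/
def WeightedBound (t : ℕ) (c : Sym2 V → C) (A : Finset V) : Prop :=
  ∀ K b, IsAdmissible t c A K b → #A + ∑ i ∈ K, b i ≤ extremalOrder t #K

theorem IsAdmissible.mono (h : IsAdmissible t c A K b) (hDA : D ⊆ A) :
    IsAdmissible t c D K b where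
  nonempty := h.nonempty
  color_mem x hx y hy := h.color_mem x (hDA hx) y (hDA hy)
  pathBounded i hi := (h.pathBounded i hi).mono (colorGraph_mono hDA)

theorem IsAdmissible.erase (h : IsAdmissible t c A K b) (hK : 2 ≤ #K) (hi : IsFreeOf c A i) :
    IsAdmissible t c A (K.erase i) b where
  nonempty := (Finset.one_lt_card_iff_nontrivial.1 hK).erase_nonempty
  color_mem x hx y hy hxy := Finset.mem_erase.2 ⟨hi x hx y hy hxy, h.color_mem x hx y hy hxy⟩
  pathBounded j hj := h.pathBounded j (Finset.mem_of_mem_erase hj)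

theorem IsAdmissible.two_mul_sum_le (h : IsAdmissible t c A K b) {K' : Finset C} (hK' : K' ⊆ K) :
    2 * ∑ i ∈ K', b i ≤ (t - 1) * #K' := by
  rw [Finset.mul_sum, mul_comm]
  refine Finset.sum_le_card_nsmul _ _ _ fun i hi => ?_
  have := (h.pathBounded i (hK' hi)).two_mul_lt
  omega

theorem IsAdmissible.add_single (h : IsAdmissible t c Y K b)
    (hi : PathBounded (colorGraph c A i) t (b i)) (hYA : Y ⊆ A)
    (hYZ : (colorGraph c A i).IsCompleteBetween Y Z) (hZ : 2 * #Z < t) (hcard : t ≤ #Y + #Z) :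
    IsAdmissible t c Y K (b + Pi.single i #Z) where
  nonempty := h.nonempty
  color_mem := h.color_mem
  pathBounded j hj := by
    by_cases hji : j = i
    · subst hji
      rw [Pi.add_apply, Pi.single_eq_same]
      exact hi.add_card_of_isCompleteBetween (colorGraph_mono hYA) (fun x y hxy => hxy.2.1) hYZ
        hZ hcard
    · rw [Pi.add_apply, Pi.single_eq_of_ne hji, add_zero]
      exact h.pathBounded j hj

theorem sum_add_single (b : C → ℕ) (m : ℕ) (hi : i ∈ K) :
    ∑ j ∈ K, (b + Pi.single i m : C → ℕ) j = ∑ j ∈ K, b j + m := by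
  simp only [Pi.add_apply, Finset.sum_add_distrib, Finset.sum_pi_single', if_pos hi]

theorem IsAdmissible.isFreeOf_of_isCompleteBetween (h : IsAdmissible t c A K b) (hi : i ∈ K)
    (ht : 3 ≤ t) (hXA : X ⊆ A) (hXY : (colorGraph c A i).IsCompleteBetween X Y)
    (hX : (t + 1) / 2 ≤ #X) (hY : t / 2 ≤ #Y) : IsFreeOf c X i := by
  intro x hx y hy hxy hcolor
  exact (h.pathBounded i hi).not_adj_of_isCompleteBetween ht hXY hX hY hx hy
    ⟨hxy, hXA hx, hXA hy, hcolor⟩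

theorem WeightedBound.card_add_sum_erase_le (hA : WeightedBound t c A)
    (h : IsAdmissible t c A K b) (hK : 2 ≤ #K) (hi : i ∈ K) (hfree : IsFreeOf c A i) :
    #A + ∑ j ∈ K.erase i, b j ≤ extremalOrder t (#K - 1) := by
  rw [← Finset.card_erase_of_mem hi]
  exact hA _ _ (h.erase hK hfree)

theorem WeightedBound.card_add_sum_erase_erase_le (hA : WeightedBound t c A)
    (h : IsAdmissible t c A K b) (hK : 3 ≤ #K) (hi : i ∈ K) (hj : j ∈ K) (hij : i ≠ j)
    (hi_free : IsFreeOf c A i) (hj_free : IsFreeOf c A j) :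
    #A + ∑ l ∈ (K.erase i).erase j, b l ≤ extremalOrder t (#K - 2) := by
  have hcard := Finset.card_erase_of_mem hi
  have := hA.card_add_sum_erase_le (h.erase (by omega) hi_free) (by omega)
    (Finset.mem_erase.2 ⟨hij.symm, hj⟩) hj_free
  rwa [hcard, Nat.sub_sub] at this

theorem isClique_colorGraph (hA : ∀ x ∈ A, ∀ y ∈ A, x ≠ y → c s(x, y) = i) (hX : X ⊆ A) :
    (colorGraph c A i).IsClique X :=
  fun x hx y hy hxy => ⟨hxy, hX hx, hX hy, hA x (hX hx) y (hX hy) hxy⟩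

theorem IsAdmissible.card_add_sum_le_of_card_eq_one (h : IsAdmissible t c A K b) (ht : 3 ≤ t)
    (hK : #K = 1) : #A + ∑ i ∈ K, b i ≤ t - 1 := by
  obtain ⟨i, rfl⟩ := Finset.card_eq_one.1 hK
  have hi := h.pathBounded i (Finset.mem_singleton_self i)
  have hclique := isClique_colorGraph (c := c) (A := A) (X := A)
    (fun x hx y hy hxy => Finset.mem_singleton.1 (h.color_mem x hx y hy hxy)) subset_rfl
  rw [Finset.sum_singleton]
  rcases Nat.eq_zero_or_pos (b i) with hb | hb
  · by_contra! hcard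
    obtain ⟨l, hl, hlen⟩ := exists_isPathPlusList_of_isClique hclique (by omega)
    have := hi.length_lt l hl
    omega
  · obtain ⟨l, -, hl, hlen⟩ := isPathList_nil.exists_clique_extension hclique (m := #A)
      (by simp) (by simp)
    have := hi.length_add_le hb l hl
    simp only [List.length_nil] at hlen
    omega

end Admissible

section TwoColors

variable {V C : Type*} {c : Sym2 V → C} {A X T : Finset V} {K : Finset C} {b : C → ℕ}
  {i r s : C} {t n br bs : ℕ} {v x : V} {l : List V}

theorem isCompleteBetween_of_separating
    (hc : ∀ x ∈ A, ∀ y ∈ A, x ≠ y → c s(x, y) = r ∨ c s(x, y) = s) (hXA : X ⊆ A)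
    (hsep : ∀ x ∈ X, ∀ y ∈ A, y ∉ X → y ∉ l → ¬ (colorGraph c A r).Adj x y) :
    (colorGraph c A s).IsCompleteBetween X ((A \ X) \ l.toFinset : Finset V) := by
  intro x hx y hy
  simp only [Finset.mem_coe, Finset.mem_sdiff, List.mem_toFinset] at hy
  have hxy : x ≠ y := fun h => hy.1.2 (h ▸ hx)
  refine ⟨hxy, hXA hx, hy.1.1, (hc x (hXA hx) y hy.1.1 hxy).resolve_left fun h => ?_⟩
  exact hsep x hx y hy.1.1 hy.1.2 hy.2 ⟨hxy, hXA hx, hy.1.1, h⟩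

/-- Color `s` joins `X` to the vertices off the path and off `X`, so both sets are cliques of
color `r`; one of them prolongs the path. -/
theorem card_lt_of_separating (ht : 4 ≤ t) (hs : PathBounded (colorGraph c A s) t bs)
    (hc : ∀ x ∈ A, ∀ y ∈ A, x ≠ y → c s(x, y) = r ∨ c s(x, y) = s) (hXA : X ⊆ A)
    (hX : #X = (t + 1) / 2) (hx : x ∈ X) (hpath : IsPathList (colorGraph c A r) (x :: l))
    (hlX : ∀ z ∈ l, z ∉ X)
    (hsep : ∀ x ∈ X, ∀ y ∈ A, y ∉ X → y ∉ l → ¬ (colorGraph c A r).Adj x y) (hn : n < t)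
    (hext : ∀ l', x :: l <:+ l' → IsPathList (colorGraph c A r) l' → l'.length ≤ n)
    (hclique : ∀ Y : Finset V, (colorGraph c A r).IsClique Y → 3 ≤ #Y → #Y ≤ n) :
    #A < n + t := by
  by_contra! hA
  have hXY := isCompleteBetween_of_separating hc hXA hsep
  have hcard := card_le_card_sdiff_add_length (A \ X) l
  have hAX := Finset.card_sdiff_add_card_eq_card hXA
  have hlen := hext _ List.suffix_rfl hpath
  set Y := (A \ X) \ l.toFinset
  have hYA : Y ⊆ A := Finset.sdiff_subset.trans Finset.sdiff_subset
  have isClique {Z : Finset V} (hZA : Z ⊆ A)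
      (hZ : ∀ x ∈ Z, ∀ y ∈ Z, ¬ (colorGraph c A s).Adj x y) : (colorGraph c A r).IsClique Z :=
    fun x hx y hy hxy => ⟨hxy, hZA hx, hZA hy, (hc x (hZA hx) y (hZA hy) hxy).resolve_right
      fun h => hZ x hx y hy ⟨hxy, hZA hx, hZA hy, h⟩⟩
  rw [List.length_cons] at hlen
  have hX_clique := isClique hXA fun x hx y hy =>
    hs.not_adj_of_isCompleteBetween (by omega) hXY hX.ge (by omega) hx hy
  have hY_clique := isClique hYA fun x hx y hy =>
    hs.not_adj_of_isCompleteBetween (by omega) hXY.symm (by omega) (by omega) hx hy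
  have hY := hclique Y hY_clique (by omega)
  have hXl : X \ l.toFinset = X := Finset.sdiff_eq_self_of_disjoint <|
    Finset.disjoint_right.2 fun z hz => hlX z (List.mem_toFinset.1 hz)
  have hXl_cons := card_sdiff_toFinset_le_cons X x l
  rw [hXl] at hXl_cons
  obtain ⟨l', hsuf, hl', hlen'⟩ := hpath.exists_clique_extension hX_clique (m := #X - 1)
    (by simpa using hx) (by omega)
  have := hext l' hsuf hl'
  rw [List.length_cons] at hlen'
  omega

theorem add_add_le_of_separating (ht : 4 ≤ t) (hr : PathBounded (colorGraph c A r) t br)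
    (hs : PathBounded (colorGraph c A s) t bs) (hbr : 0 < br)
    (hc : ∀ x ∈ A, ∀ y ∈ A, x ≠ y → c s(x, y) = r ∨ c s(x, y) = s) :
    #A + br + bs ≤ 2 * (t - 1) := by
  by_contra! hcard
  have hbr_lt := hr.two_mul_lt
  have hbs_lt := hs.two_mul_lt
  obtain ⟨x, l, X, hpath, -, hx, hXA, hX, hlX, hsep⟩ :=
    exists_isPathList_separating (G := colorGraph c A r) (l₀ := []) (m := (t + 1) / 2) (by omega)
      (subset_rfl (a := A)) (by simp) (fun y _ => isPathList_singleton y) fun F _ _ hF =>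
        Finset.exists_mem_notMem_of_card_lt_card (by omega)
  have hlen {l' : List V} (hl' : IsPathList (colorGraph c A r) l') : l'.length ≤ t - 2 * br := by
    have := hr.length_add_le hbr l' hl'
    omega
  have hclique (Y : Finset V) (hY : (colorGraph c A r).IsClique Y) (_ : 3 ≤ #Y) :
      #Y ≤ t - 2 * br := by
    obtain ⟨l', -, hl', hl'_len⟩ := isPathList_nil.exists_clique_extension hY (m := #Y)
      (by simp) (by simp)
    rw [← zero_add #Y, ← List.length_nil (α := V), ← hl'_len]
    exact hlen hl'
  rcases Nat.eq_zero_or_pos bs with rfl | hbs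
  · have := card_lt_of_separating ht hs hc hXA hX hx hpath hlX hsep (n := t - 2 * br) (by omega)
      (fun _ _ => hlen) hclique
    omega
  · have hXY := isCompleteBetween_of_separating hc hXA hsep
    have hAX := Finset.card_sdiff_add_card_eq_card hXA
    have hAl := card_le_card_sdiff_add_length (A \ X) l
    have hl := hlen hpath
    rw [List.length_cons] at hl
    obtain ⟨l', hl', hl'_len⟩ := exists_isPathList_of_isCompleteBetween hXY
      (m := t + 1 - 2 * bs) (by omega) (by omega)
    have := hs.length_add_le hbs l' hl'
    omega

theorem card_le_degree_add_of_cliqueFree (ht : 4 ≤ t) (hs : PathBounded (colorGraph c A s) t bs)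
    (hc : ∀ x ∈ A, ∀ y ∈ A, x ≠ y → c s(x, y) = r ∨ c s(x, y) = s)
    (hr : (colorGraph c A r).CliqueFree 3) (hx : x ∈ A) :
    #A ≤ #{y ∈ A | (colorGraph c A s).Adj x y} + t := by
  have hclique : (colorGraph c A s).IsClique ({y ∈ A | (colorGraph c A r).Adj x y} : Finset V) := by
    intro y hy z hz hyz
    simp only [Finset.mem_coe, Finset.mem_filter] at hy hz
    refine ⟨hyz, hy.1, hz.1, (hc y hy.1 z hz.1 hyz).resolve_left fun h => ?_⟩
    exact hr {x, y, z} (is3Clique_triple_iff.2 ⟨hy.2, hz.2, hyz, hy.1, hz.1, h⟩)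
  have hcover : #(A.erase x) ≤ #{y ∈ A | (colorGraph c A r).Adj x y} +
      #{y ∈ A | (colorGraph c A s).Adj x y} := by
    refine (Finset.card_le_card fun y hy => ?_).trans (Finset.card_union_le _ _)
    obtain ⟨hyx, hy⟩ := Finset.mem_erase.1 hy
    rw [Finset.mem_union, Finset.mem_filter, Finset.mem_filter]
    exact (hc x hx y hy hyx.symm).imp (fun h => ⟨hy, hyx.symm, hx, hy, h⟩)
      fun h => ⟨hy, hyx.symm, hx, hy, h⟩
  rw [Finset.card_erase_of_mem hx] at hcover
  rcases Nat.lt_or_ge #{y ∈ A | (colorGraph c A r).Adj x y} 3 with hsmall | hlarge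
  · omega
  · obtain ⟨l, hl, hlen⟩ := exists_isPathPlusList_of_isClique hclique hlarge
    have := hs.length_lt l hl
    omega

theorem exists_isNClique_three (ht : 4 ≤ t) (hs : PathBounded (colorGraph c A s) t bs)
    (hc : ∀ x ∈ A, ∀ y ∈ A, x ≠ y → c s(x, y) = r ∨ c s(x, y) = s) (hA : 2 * (t - 1) < #A) :
    ∃ T, (colorGraph c A r).IsNClique 3 T := by
  by_contra! hr_free
  have hs_degree : ∀ x ∈ A, t - 1 ≤ #{y ∈ A | (colorGraph c A s).Adj x y} := fun x hx => by
    have := card_le_degree_add_of_cliqueFree ht hs hc hr_free hx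
    omega
  by_cases hs_free : (colorGraph c A s).CliqueFree 3
  · obtain ⟨x, hx⟩ : A.Nonempty := Finset.card_pos.1 (by omega)
    obtain ⟨T, hT, hT_card⟩ := Finset.exists_subset_card_eq (show 3 ≤ _ from
      le_trans (by omega) (hs_degree x hx))
    refine hr_free T ⟨fun y hy z hz hyz => ?_, hT_card⟩
    obtain ⟨hyA, hxy⟩ := Finset.mem_filter.1 (hT hy)
    obtain ⟨hzA, hxz⟩ := Finset.mem_filter.1 (hT hz)
    refine ⟨hyz, hyA, hzA, (hc y hyA z hzA hyz).resolve_right fun h => ?_⟩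
    exact hs_free {x, y, z} (is3Clique_triple_iff.2 ⟨hxy, hxz, hyz, hyA, hzA, h⟩)
  · obtain ⟨T, hT⟩ := not_forall_not.1 hs_free
    obtain ⟨x, y, z, hxy, hxz, hyz, rfl⟩ := is3Clique_iff.1 hT
    have htri := isPathPlusList_triangle hxy hyz hxz
    obtain ⟨l, hsuf, hl, hlen⟩ :=
      htri.1.exists_extension_of_le_degree hs_degree hxy.2.1
    have := hs.length_lt l (htri.of_suffix hsuf hl)
    omega

theorem connectedOn_or_connectedOn
    (hc : ∀ x ∈ A, ∀ y ∈ A, x ≠ y → c s(x, y) = r ∨ c s(x, y) = s) :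
    ConnectedOn c A r ∨ ConnectedOn c A s := by
  by_contra! h
  simp only [ConnectedOn, not_forall] at h
  obtain ⟨⟨x, hx, y, hy, hxy⟩, u, hu, v, hv, huv⟩ := h
  have hs_adj {a b : V} (ha : a ∈ A) (hb : b ∈ A) (hab : ¬ (colorGraph c A r).Reachable a b) :
      (colorGraph c A s).Reachable a b := by
    have hne : a ≠ b := fun h => hab (h ▸ .rfl)
    exact Adj.reachable ⟨hne, ha, hb, (hc a ha b hb hne).resolve_left fun h =>
      hab (Adj.reachable ⟨hne, ha, hb, h⟩)⟩
  have huv_r : (colorGraph c A r).Reachable u v := by_contra fun h => huv (hs_adj hu hv h)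
  obtain ⟨z, hz, huz⟩ : ∃ z ∈ A, ¬ (colorGraph c A r).Reachable u z := by
    by_contra! h
    exact hxy ((h x hx).symm.trans (h y hy))
  exact huv ((hs_adj hu hz huz).trans
    (hs_adj hv hz fun h => huz (huv_r.trans h)).symm)

theorem ConnectedOn.exists_reachable_sdiff_erase (h : ConnectedOn c A i) (hT : T.Nonempty)
    (hTA : T ⊆ A) (hx : x ∈ A) :
    ∃ v ∈ T, (colorGraph c (A \ T.erase v) i).Reachable v x := by
  obtain ⟨u, hu⟩ := hT
  have hxu := (reachable_iff_reflTransGen x u).1 (h x hx u (hTA hu))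
  clear hx
  induction hxu using Relation.ReflTransGen.head_induction_on with
  | refl => exact ⟨u, hu, .rfl⟩
  | @head x y hxy _ ih =>
    by_cases hxT : x ∈ T
    · exact ⟨x, hxT, .rfl⟩
    · obtain ⟨v, hv, hvy⟩ := ih
      have hvA : v ∈ A \ T.erase v := by simp [hTA hv]
      have hxA : x ∈ A \ T.erase v := by simp [hxy.2.1, hxT]
      exact ⟨v, hv, hvy.trans
        (Adj.reachable ((colorGraph_adj).2
          ⟨hxy.1, hxA, mem_of_reachable hvy hvA, hxy.2.2.2⟩)).symm⟩

theorem subset_of_isNClique (hT : (colorGraph c A i).IsNClique n T) (hn : 2 ≤ n) : T ⊆ A := by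
  intro x hx
  obtain ⟨y, hy, hyx⟩ := Finset.exists_mem_ne (hT.2 ▸ hn) x
  exact (hT.1 hx hy hyx.symm).2.1

/-- One of the vertices of the triangle keeps a large component when the other two are removed. -/
theorem ConnectedOn.exists_lt_card_filter_reachable (h : ConnectedOn c A i)
    (hT : (colorGraph c A i).IsNClique 3 T) (hA : 2 * (t - 1) < #A) :
    ∃ v ∈ T, (t + 1) / 2 ≤ #{x ∈ A | (colorGraph c (A \ T.erase v) i).Reachable v x} := by
  by_contra! hsmall
  have hTne : T.Nonempty := Finset.card_pos.1 (by rw [hT.2]; omega)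
  have hcover : A ⊆ T.biUnion fun v =>
      {x ∈ A | (colorGraph c (A \ T.erase v) i).Reachable v x} := fun x hx => by
    obtain ⟨v, hv, hvx⟩ :=
      h.exists_reachable_sdiff_erase hTne (subset_of_isNClique hT (by omega)) hx
    exact Finset.mem_biUnion.2 ⟨v, hv, Finset.mem_filter.2 ⟨hx, hvx⟩⟩
  have := (Finset.card_le_card hcover).trans
    (Finset.card_biUnion_le_card_mul _ _ ((t + 1) / 2 - 1) fun v hv => by
      have := hsmall v hv
      omega)
  rw [hT.2] at this
  omega

theorem ConnectedOn.exists_isPathPlusList_separating (h : ConnectedOn c A i) (ht : 4 ≤ t)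
    (hT : (colorGraph c A i).IsNClique 3 T) (hA : 2 * (t - 1) < #A) :
    ∃ x l X, IsPathPlusList (colorGraph c A i) (x :: l) ∧ x ∈ X ∧ X ⊆ A ∧ #X = (t + 1) / 2 ∧
      (∀ z ∈ l, z ∉ X) ∧
      ∀ x ∈ X, ∀ y ∈ A, y ∉ X → y ∉ l → ¬ (colorGraph c A i).Adj x y := by
  have hTA := subset_of_isNClique hT (by omega)
  obtain ⟨v, hv, hcomp⟩ := h.exists_lt_card_filter_reachable hT hA
  obtain ⟨p, q, hpq, hT_erase⟩ : ∃ p q, p ≠ q ∧ T.erase v = {p, q} :=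
    Finset.card_eq_two.1 (by rw [Finset.card_erase_of_mem hv, hT.2])
  have hp : p ∈ T.erase v := by simp [hT_erase]
  have hq : q ∈ T.erase v := by simp [hT_erase]
  rw [Finset.mem_erase] at hp hq
  have htri : IsPathPlusList (colorGraph c A i) [v, p, q] :=
    isPathPlusList_triangle (hT.1 hv hp.2 hp.1.symm) (hT.1 hp.2 hq.2 hpq)
      (hT.1 hv hq.2 hq.1.symm)
  have hroot (F : Finset V) (_ : F ⊆ A \ T.erase v)
      (hclosed : ∀ x ∈ F, ∀ y ∈ A \ T.erase v, (colorGraph c A i).Adj x y → y ∈ F)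
      (hF : #F < (t + 1) / 2) : ∃ y ∈ ({v} : Finset V), y ∉ F := by
    refine ⟨v, Finset.mem_singleton_self v, fun hvF => hF.not_ge (hcomp.trans ?_)⟩
    refine Finset.card_le_card fun x hx => ?_
    exact mem_of_reachable_of_closed (Finset.mem_filter.1 hx).2 (fun a ha b hab =>
      hclosed a ha b hab.2.2.1 (colorGraph_mono Finset.sdiff_subset hab)) hvF
  obtain ⟨x, l, X, hpath, ⟨y, hy, hsuf⟩, hx, hXW, hX, hlX, hsep⟩ :=
    exists_isPathList_separating (l₀ := [p, q]) (S := {v}) (by omega) (by simp [hTA hv])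
      (by simp [hT_erase]) (fun y hy => by rw [Finset.mem_singleton.1 hy]; exact htri.1) hroot
  obtain rfl := Finset.mem_singleton.1 hy
  refine ⟨x, l, X, htri.of_suffix hsuf hpath, hx, hXW.trans Finset.sdiff_subset, hX, hlX,
    fun a ha b hb hbX hbl => hsep a ha b (Finset.mem_sdiff.2 ⟨hb, fun hbT => hbl ?_⟩) hbX hbl⟩
  have hbpq : b ∈ [p, q] := by simpa [hT_erase] using hbT
  rcases List.suffix_cons_iff.1 hsuf with heq | hsuf
  · exact (List.cons.inj heq).2 ▸ hbpq
  · exact hsuf.subset (List.mem_cons_of_mem _ hbpq)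

theorem ConnectedOn.card_le_of_isNClique (h : ConnectedOn c A r) (ht : 4 ≤ t)
    (hT : (colorGraph c A r).IsNClique 3 T) (hr : PathBounded (colorGraph c A r) t br)
    (hs : PathBounded (colorGraph c A s) t bs)
    (hc : ∀ x ∈ A, ∀ y ∈ A, x ≠ y → c s(x, y) = r ∨ c s(x, y) = s) : #A ≤ 2 * (t - 1) := by
  by_contra! hA
  obtain ⟨x, l, X, hpath, hx, hXA, hX, hlX, hsep⟩ := h.exists_isPathPlusList_separating ht hT hA
  have hlen (l' : List V) (hsuf : x :: l <:+ l') (hl' : IsPathList (colorGraph c A r) l') :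
      l'.length ≤ t - 1 :=
    Nat.le_sub_one_of_lt (hr.length_lt l' (hpath.of_suffix hsuf hl'))
  have hclique (Y : Finset V) (hY : (colorGraph c A r).IsClique Y) (hY_card : 3 ≤ #Y) :
      #Y ≤ t - 1 := by
    obtain ⟨l', hl', hlen'⟩ := exists_isPathPlusList_of_isClique hY hY_card
    exact hlen' ▸ Nat.le_sub_one_of_lt (hr.length_lt l' hl')
  have := card_lt_of_separating ht hs hc hXA hX hx hpath.1 hlX hsep (by omega) hlen hclique
  omega

theorem IsAdmissible.card_add_sum_le_of_card_eq_two (h : IsAdmissible t c A K b) (ht : 4 ≤ t)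
    (hK : #K = 2) : #A + ∑ i ∈ K, b i ≤ 2 * (t - 1) := by
  obtain ⟨r, s, hrs, rfl⟩ := Finset.card_eq_two.1 hK
  have hr := h.pathBounded r (by simp)
  have hs := h.pathBounded s (by simp)
  have hc : ∀ x ∈ A, ∀ y ∈ A, x ≠ y → c s(x, y) = r ∨ c s(x, y) = s :=
    fun x hx y hy hxy => by simpa using h.color_mem x hx y hy hxy
  have hc' : ∀ x ∈ A, ∀ y ∈ A, x ≠ y → c s(x, y) = s ∨ c s(x, y) = r :=
    fun x hx y hy hxy => (hc x hx y hy hxy).symm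
  rw [Finset.sum_pair hrs]
  rcases Nat.eq_zero_or_pos (b r) with hbr | hbr
  · rcases Nat.eq_zero_or_pos (b s) with hbs | hbs
    · rw [hbr, hbs]
      by_contra! hA
      refine hA.not_ge ?_
      rcases connectedOn_or_connectedOn hc with hconn | hconn
      · obtain ⟨T, hT⟩ := exists_isNClique_three ht hs hc hA
        exact hconn.card_le_of_isNClique ht hT hr hs hc
      · obtain ⟨T, hT⟩ := exists_isNClique_three ht hr hc' hA
        exact hconn.card_le_of_isNClique ht hT hs hr hc'
    · have := add_add_le_of_separating ht hs hr hbs hc'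
      omega
  · have := add_add_le_of_separating ht hr hs hbr hc
    omega

end TwoColors

section Partition

variable {V C : Type*} {c : Sym2 V → C} {A X Z U : Finset V} {K : Finset C} {b : C → ℕ}
  {i j r s : C} {q : V → V} {x y z : V} {t : ℕ}

theorem IsAdmissible.seven_mul_lt (h : IsAdmissible t c A K b) (hK : 3 ≤ #K)
    (hA : extremalOrder t #K < #A + ∑ i ∈ K, b i) : 7 * (t - 1) < 2 * #A := by
  have hsum := h.two_mul_sum_le subset_rfl
  have := mul_le_two_mul_extremalOrder (t := t) hK
  rw [mul_add] at this
  omega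

theorem IsAdmissible.card_add_sum_le_of_isCompleteBetween (h : IsAdmissible t c A K b)
    (ht : 3 ≤ t) (hK : 3 ≤ #K) (ih : ∀ D ⊂ A, WeightedBound t c D) (hi : i ∈ K) (hZA : Z ⊆ A)
    (hZ : Z.Nonempty) (hcut : (colorGraph c A i).IsCompleteBetween (A \ Z : Finset V) Z)
    (hle : 2 * #Z ≤ #A) : #A + ∑ j ∈ K, b j ≤ extremalOrder t #K := by
  by_contra! hA
  have := h.seven_mul_lt hK hA
  have hcard := Finset.card_sdiff_add_card_eq_card hZA
  have hrest : A \ Z ⊂ A := Finset.sdiff_ssubset hZA hZ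
  rcases Nat.lt_or_ge (2 * #Z) t with hsmall | hlarge
  · have := ih _ hrest _ _ ((h.mono hrest.1).add_single (h.pathBounded i hi) hrest.1 hcut hsmall
      (by omega))
    rw [sum_add_single b _ hi] at this
    omega
  · have hproper : Z ⊂ A := hZA.ssubset_of_ne fun h => by subst h; omega
    have hbi := (h.pathBounded i hi).eq_zero_of_isCompleteBetween hcut (by omega) (by omega)
    have hZ_bound := (ih Z hproper).card_add_sum_erase_le (h.mono hZA) (by omega) hi
      (h.isFreeOf_of_isCompleteBetween hi ht hZA hcut.symm (by omega) (by omega))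
    have hrest_bound := (ih _ hrest).card_add_sum_erase_le (h.mono hrest.1) (by omega) hi
      (h.isFreeOf_of_isCompleteBetween hi ht hrest.1 hcut (by omega) (by omega))
    have := two_mul_extremalOrder_le (t := t) (k := #K - 1) (by omega)
    rw [Nat.sub_add_cancel (by omega)] at this
    rw [← Finset.add_sum_erase _ _ hi] at hA
    omega

/-- `A` splits into two nonempty sets with all edges between them of one color. -/
def HasMonoCut (c : Sym2 V → C) (A : Finset V) : Prop :=
  ∃ X ⊆ A, X.Nonempty ∧ (A \ X).Nonempty ∧
    ∃ i, (colorGraph c A i).IsCompleteBetween X (A \ X : Finset V)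

theorem IsAdmissible.card_add_sum_le_of_hasMonoCut (h : IsAdmissible t c A K b) (ht : 3 ≤ t)
    (hK : 3 ≤ #K) (ih : ∀ D ⊂ A, WeightedBound t c D) (hcut : HasMonoCut c A) :
    #A + ∑ i ∈ K, b i ≤ extremalOrder t #K := by
  obtain ⟨X, hXA, hX, hY, i, hXY⟩ := hcut
  have hi : i ∈ K := by
    obtain ⟨x, hx⟩ := hX
    obtain ⟨y, hy⟩ := hY
    obtain ⟨hxy, hxA, hyA, rfl⟩ := hXY hx hy
    exact h.color_mem x hxA y hyA hxy
  have hcard := Finset.card_sdiff_add_card_eq_card hXA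
  rcases Nat.le_total (2 * #X) #A with hle | hle
  · exact h.card_add_sum_le_of_isCompleteBetween ht hK ih hi hXA hX hXY.symm hle
  · exact h.card_add_sum_le_of_isCompleteBetween ht hK ih hi Finset.sdiff_subset hY
      (by rwa [Finset.sdiff_sdiff_eq_self hXA]) (by omega)

/-- The part of `x` in the partition of `A` into the fibres of `q`. -/
noncomputable def part (A : Finset V) (q : V → V) (x : V) : Finset V := {y ∈ A | q y = q x}

/-- The vertices of `A` outside the part of `x` joined to `x` in color `i`. -/
noncomputable def outerNeighbors (c : Sym2 V → C) (A : Finset V) (q : V → V) (i : C) (x : V) :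
    Finset V :=
  {y ∈ A | q y ≠ q x ∧ c s(x, y) = i}

theorem mem_part : y ∈ part A q x ↔ y ∈ A ∧ q y = q x := Finset.mem_filter

theorem mem_outerNeighbors :
    y ∈ outerNeighbors c A q i x ↔ y ∈ A ∧ q y ≠ q x ∧ c s(x, y) = i := Finset.mem_filter

theorem part_subset : part A q x ⊆ A := Finset.filter_subset _ _

theorem outerNeighbors_subset : outerNeighbors c A q i x ⊆ A := Finset.filter_subset _ _

theorem part_ssubset_of_mem_outerNeighbors (hy : y ∈ outerNeighbors c A q i x) :
    part A q x ⊂ A :=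
  Finset.filter_ssubset.2
    ⟨y, (mem_outerNeighbors.1 hy).1, (mem_outerNeighbors.1 hy).2.1⟩

theorem outerNeighbors_ssubset (hx : x ∈ A) : outerNeighbors c A q i x ⊂ A :=
  Finset.filter_ssubset.2 ⟨x, hx, fun h => h.1 rfl⟩

theorem mem_part_self (hx : x ∈ A) : x ∈ part A q x := mem_part.2 ⟨hx, rfl⟩

namespace IsGallaiPartition

variable (hP : IsGallaiPartition c A r s q)
include hP

theorem swap : IsGallaiPartition c A s r q :=
  ⟨hP.exists_ne, hP.color_eq, fun x hx y hy hxy => (hP.color_mem x hx y hy hxy).symm⟩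

theorem color_eq_color (hx : x ∈ A) (hy : y ∈ A) (hz : z ∈ A) (hxy : q x = q y)
    (hxz : q x ≠ q z) : c s(x, z) = c s(y, z) := by
  rw [hP.color_eq x hx z hz hxz, hP.color_eq y hy z hz (hxy ▸ hxz), hxy]

theorem isCompleteBetween_part_outerNeighbors (hx : x ∈ A) :
    (colorGraph c A i).IsCompleteBetween (part A q x) (outerNeighbors c A q i x) := by
  intro y hy z hz
  obtain ⟨hyA, hyx⟩ := mem_part.1 hy
  obtain ⟨hzA, hzx, hxz⟩ := mem_outerNeighbors.1 hz
  exact ⟨fun h => hzx (h ▸ hyx), hyA, hzA,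
    hP.color_eq_color hyA hx hzA hyx (hyx ▸ hzx.symm) ▸ hxz⟩

theorem part_subset_outerNeighbors (hx : x ∈ A) (hy : y ∈ outerNeighbors c A q i x) :
    part A q y ⊆ outerNeighbors c A q i x := by
  intro z hz
  obtain ⟨hzA, hzy⟩ := mem_part.1 hz
  obtain ⟨hyA, hyx, hxy⟩ := mem_outerNeighbors.1 hy
  refine mem_outerNeighbors.2 ⟨hzA, hzy ▸ hyx, ?_⟩
  rw [Sym2.eq_swap, hP.color_eq_color hzA hyA hx hzy (hzy ▸ hyx), Sym2.eq_swap, hxy]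

theorem card_eq (hrs : r ≠ s) (hx : x ∈ A) :
    #A = #(part A q x) + #(outerNeighbors c A q r x) + #(outerNeighbors c A q s x) := by
  have hcompl : {y ∈ A | ¬ q y = q x} = outerNeighbors c A q r x ∪ outerNeighbors c A q s x := by
    ext y
    simp only [Finset.mem_filter, Finset.mem_union, mem_outerNeighbors]
    have := fun hy h => hP.color_mem x hx y hy (Ne.symm h)
    tauto
  have hdisj : Disjoint (outerNeighbors c A q r x) (outerNeighbors c A q s x) :=
    Finset.disjoint_left.2 fun y hr hs =>
      hrs ((mem_outerNeighbors.1 hr).2.2.symm.trans (mem_outerNeighbors.1 hs).2.2)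
  rw [← Finset.card_filter_add_card_filter_not fun y => q y = q x, hcompl,
    Finset.card_union_of_disjoint hdisj, ← add_assoc, part]

theorem outerNeighbors_nonempty (hcut : ¬ HasMonoCut c A) (hx : x ∈ A) :
    (outerNeighbors c A q r x).Nonempty := by
  by_contra! hempty
  have hs {y : V} (hy : y ∈ A) (hxy : q y ≠ q x) : y ∈ outerNeighbors c A q s x := by
    refine mem_outerNeighbors.2 ⟨hy, hxy, ?_⟩
    refine (hP.color_mem x hx y hy hxy.symm).resolve_left fun h => ?_
    exact Finset.notMem_empty y (hempty ▸ mem_outerNeighbors.2 ⟨hy, hxy, h⟩)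
  refine hcut ⟨part A q x, part_subset, ⟨x, mem_part_self hx⟩, ?_, s, fun y hy z hz => ?_⟩
  · obtain ⟨u, hu, v, hv, huv⟩ := hP.exists_ne
    by_cases hux : q u = q x
    · exact ⟨v, by simp [mem_part, hv, ← hux, huv.symm]⟩
    · exact ⟨u, by simp [mem_part, hu, hux]⟩
  · obtain ⟨hzA, hzx⟩ := Finset.mem_sdiff.1 (Finset.mem_coe.1 hz)
    exact hP.isCompleteBetween_part_outerNeighbors hx hy
      (hs hzA fun h => hzx (mem_part.2 ⟨hzA, h⟩))

theorem ne_of_not_hasMonoCut (hcut : ¬ HasMonoCut c A) : r ≠ s := by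
  rintro rfl
  obtain ⟨x, hx, y, hy, hxy⟩ := hP.exists_ne
  refine hcut ⟨part A q x, part_subset, ⟨x, mem_part_self hx⟩,
    ⟨y, by simp [mem_part, hy, hxy.symm]⟩, r, fun u hu v hv => ?_⟩
  obtain ⟨hvA, hvx⟩ := Finset.mem_sdiff.1 (Finset.mem_coe.1 hv)
  have hne : q v ≠ q x := fun h => hvx (mem_part.2 ⟨hvA, h⟩)
  exact hP.isCompleteBetween_part_outerNeighbors hx hu
    (mem_outerNeighbors.2 ⟨hvA, hne, or_self_iff.1 (hP.color_mem x hx v hvA hne.symm)⟩)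

/-- A component of color `r` is a union of parts. -/
theorem connectedOn (hcut : ¬ HasMonoCut c A) : ConnectedOn c A r := by
  intro x hx y hy
  by_contra hxy
  let X : Finset V := {z ∈ A | (colorGraph c A r).Reachable x z}
  refine hcut ⟨X, Finset.filter_subset _ _, ⟨x, by simp [X, hx]⟩,
    ⟨y, by simp [X, hy, hxy]⟩, s, fun u hu v hv => ?_⟩
  obtain ⟨huA, hxu⟩ := Finset.mem_filter.1 (Finset.mem_coe.1 hu)
  obtain ⟨hvA, hxv⟩ : v ∈ A ∧ ¬ (colorGraph c A r).Reachable x v := by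
    rw [Finset.mem_coe, Finset.mem_sdiff] at hv
    exact ⟨hv.1, fun h => hv.2 (Finset.mem_filter.2 ⟨hv.1, h⟩)⟩
  have hne : u ≠ v := fun h => hxv (h ▸ hxu)
  have huv : q u ≠ q v := by
    intro huv
    obtain ⟨w, hw⟩ := hP.outerNeighbors_nonempty hcut huA
    have hjoin := hP.isCompleteBetween_part_outerNeighbors (i := r) huA
    exact hxv (hxu.trans ((hjoin (mem_part_self huA) hw).reachable.trans
      (hjoin (mem_part.2 ⟨hvA, huv.symm⟩) hw).symm.reachable))
  exact ⟨hne, huA, hvA, (hP.color_mem u huA v hvA huv).resolve_left fun h =>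
    hxv (hxu.trans (Adj.reachable ⟨hne, huA, hvA, h⟩))⟩

end IsGallaiPartition

end Partition

section LargePart

variable {V C : Type*} {c : Sym2 V → C} {A D X Y U : Finset V} {K : Finset C} {b : C → ℕ}
  {i j r s : C} {q : V → V} {x y : V} {t bs : ℕ}

theorem IsFreeOf.mono (h : IsFreeOf c A i) (hDA : D ⊆ A) : IsFreeOf c D i :=
  fun x hx y hy => h x (hDA hx) y (hDA hy)

theorem IsAdmissible.mem_of_mem_outerNeighbors (h : IsAdmissible t c A K b) (hx : x ∈ A)
    (hy : y ∈ outerNeighbors c A q i x) : i ∈ K := by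
  obtain ⟨hyA, hyx, rfl⟩ := mem_outerNeighbors.1 hy
  exact h.color_mem x hx y hyA fun h => hyx (h ▸ rfl)

theorem IsAdmissible.card_le_of_isCompleteBetween_of_isFreeOf (h : IsAdmissible t c A K b)
    (ht : 3 ≤ t) (hK : 3 ≤ #K) (ih : ∀ D ⊂ A, WeightedBound t c D) (hi : i ∈ K) (hj : j ∈ K)
    (hij : i ≠ j) (hU : U ⊂ A) (hUX : (colorGraph c A i).IsCompleteBetween U X)
    (hX : t / 2 ≤ #X) (hfree : IsFreeOf c U j) : #U ≤ extremalOrder t (#K - 2) := by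
  rcases Nat.lt_or_ge #U ((t + 1) / 2) with hsmall | hlarge
  · have := le_extremalOrder (t := t) (k := #K - 2) (by omega)
    omega
  · have := (ih U hU).card_add_sum_erase_erase_le (h.mono hU.1) hK hi hj hij
      (h.isFreeOf_of_isCompleteBetween hi ht hU.1 hUX hlarge hX) hfree
    omega

theorem IsGallaiPartition.card_lt_of_isFreeOf (hP : IsGallaiPartition c A r s q) (ht : 3 ≤ t)
    (hs : PathBounded (colorGraph c A s) t bs) (hXA : X ⊆ A) (hfree : IsFreeOf c X r)
    (hsmall : ∀ x ∈ X, #(part A q x) < (t + 1) / 2) : #X < t - 1 + t / 2 := by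
  by_contra! hX
  obtain ⟨l, hl, hlen⟩ := exists_isPathPlusList_of_multipartite (G := colorGraph c A s) ht q
    (fun x hx y hy hxy => by
      have hne : x ≠ y := fun h => hxy (h ▸ rfl)
      exact ⟨hne, hXA hx, hXA hy, (hP.color_mem x (hXA hx) y (hXA hy) hxy).resolve_left
        (hfree x hx y hy hne)⟩)
    (fun x hx => (Finset.card_le_card (Finset.filter_subset_filter _ hXA)).trans_lt
      (hsmall x hx)) hX
  exact (hs.length_lt l hl).ne hlen

variable (h : IsAdmissible t c A K b) (ht : 4 ≤ t) (hK : 3 ≤ #K)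
  (ih : ∀ D ⊂ A, WeightedBound t c D) (hP : IsGallaiPartition c A r s q) (hrs : r ≠ s)
  (hr : r ∈ K) (hs : s ∈ K) (hx : x ∈ A)
include h ht hK ih hP hrs hr hs hx

theorem IsAdmissible.card_add_sum_le_of_two_small_outerNeighbors
    (hNr : (outerNeighbors c A q r x).Nonempty) (hNr_small : 2 * #(outerNeighbors c A q r x) < t)
    (hNs_small : 2 * #(outerNeighbors c A q s x) < t) :
    #A + ∑ i ∈ K, b i ≤ extremalOrder t #K := by
  by_contra! hA
  have := h.seven_mul_lt hK hA
  have hcard := hP.card_eq hrs hx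
  obtain ⟨y, hy⟩ := hNr
  have hpart := part_ssubset_of_mem_outerNeighbors hy
  have hadm := (h.mono part_subset).add_single (h.pathBounded s hs) part_subset
    (hP.isCompleteBetween_part_outerNeighbors hx) hNs_small (by omega)
  have hadm' := hadm.add_single (A := A) (i := r)
    (by rw [Pi.add_apply, Pi.single_eq_of_ne hrs, add_zero]; exact h.pathBounded r hr)
    part_subset (hP.isCompleteBetween_part_outerNeighbors hx) hNr_small (by omega)
  have := ih _ hpart _ _ hadm'
  rw [sum_add_single _ _ hr, sum_add_single _ _ hs] at this
  omega

theorem IsAdmissible.card_add_sum_le_of_one_small_outerNeighbors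
    (hpart_large : (t + 1) / 2 ≤ #(part A q x))
    (hNr_large : (t + 1) / 2 ≤ #(outerNeighbors c A q r x))
    (hNs_small : 2 * #(outerNeighbors c A q s x) < t) :
    #A + ∑ i ∈ K, b i ≤ extremalOrder t #K := by
  obtain ⟨y, hy⟩ : (outerNeighbors c A q r x).Nonempty := Finset.card_pos.1 (by omega)
  have hpart := part_ssubset_of_mem_outerNeighbors hy
  have hcard := hP.card_eq hrs hx
  have hjoin := hP.isCompleteBetween_part_outerNeighbors (i := r) hx
  have hbr := (h.pathBounded r hr).eq_zero_of_isCompleteBetween hjoin hpart_large (by omega)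
  have hpart_free := h.isFreeOf_of_isCompleteBetween hr (by omega) part_subset hjoin hpart_large
    (by omega)
  have hNr_free := h.isFreeOf_of_isCompleteBetween hr (by omega) outerNeighbors_subset hjoin.symm
    hNr_large (by omega)
  have hNr := (ih _ (outerNeighbors_ssubset hx)).card_add_sum_erase_le
    (h.mono outerNeighbors_subset) (by omega) hr hNr_free
  have hG := two_mul_extremalOrder_le (t := t) (k := #K - 1) (by omega)
  rw [Nat.sub_add_cancel (by omega)] at hG
  have hG' := le_extremalOrder (t := t) (k := #K - 1) (by omega)
  rw [← Finset.add_sum_erase _ _ hr]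
  rcases Nat.lt_or_ge (#(part A q x) + #(outerNeighbors c A q s x)) t with hlt | hge
  · omega
  · have := (ih _ hpart).card_add_sum_erase_le ((h.mono part_subset).add_single
      (h.pathBounded s hs) part_subset (hP.isCompleteBetween_part_outerNeighbors hx) hNs_small hge)
      (by omega) hr hpart_free
    rw [sum_add_single _ _ (Finset.mem_erase.2 ⟨hrs.symm, hs⟩)] at this
    omega

/-- The part of `y` is joined in color `s` to fewer than `t / 2` vertices, and the vertices joined
to it in color `r` belong to the part of `x` or to its neighbours in color `s`. -/
theorem IsAdmissible.card_add_sum_le_of_not_isFreeOf_part (hbr : b r = 0)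
    (hpart : #(part A q x) ≤ extremalOrder t (#K - 2))
    (hNr_free : IsFreeOf c (outerNeighbors c A q r x) r)
    (hNs_free : IsFreeOf c (outerNeighbors c A q s x) s) (hy : y ∈ outerNeighbors c A q r x)
    (hlarge : (t + 1) / 2 ≤ #(part A q y)) (hfree : ¬ IsFreeOf c (part A q y) s) :
    #A + ∑ i ∈ K, b i ≤ extremalOrder t #K := by
  have hyA := outerNeighbors_subset hy
  have hjoin {i : C} := hP.isCompleteBetween_part_outerNeighbors (i := i) hyA
  have hsub := hP.part_subset_outerNeighbors hx hy
  have hNs_y : #(outerNeighbors c A q s y) < t / 2 := by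
    by_contra! hle
    exact hfree (h.isFreeOf_of_isCompleteBetween hs (by omega) part_subset hjoin hlarge hle)
  let U := outerNeighbors c A q s x ∩ outerNeighbors c A q r y
  have hNr_y : outerNeighbors c A q r y ⊆ part A q x ∪ U := by
    intro z hz
    obtain ⟨hzA, hzy, hyz⟩ := mem_outerNeighbors.1 hz
    by_cases hzx : q z = q x
    · exact Finset.mem_union_left _ (mem_part.2 ⟨hzA, hzx⟩)
    · refine Finset.mem_union_right _ (Finset.mem_inter.2 ⟨mem_outerNeighbors.2 ⟨hzA, hzx, ?_⟩, hz⟩)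
      refine (hP.color_mem x hx z hzA (Ne.symm hzx)).resolve_left fun h => ?_
      exact hNr_free y hy z (mem_outerNeighbors.2 ⟨hzA, hzx, h⟩) (fun h => hzy (h ▸ rfl)) hyz
  have hU : #U ≤ extremalOrder t (#K - 2) :=
    h.card_le_of_isCompleteBetween_of_isFreeOf (by omega) hK ih hr hs hrs
      (Finset.inter_subset_left.trans_ssubset (outerNeighbors_ssubset hx))
      (fun u hu v hv => (hjoin hv (Finset.mem_inter.1 hu).2).symm) (by omega)
      (hNs_free.mono Finset.inter_subset_left)
  have hpart_y := (ih _ (hsub.trans_ssubset (outerNeighbors_ssubset hx))).card_add_sum_erase_le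
    (h.mono part_subset) (by omega) hr (hNr_free.mono hsub)
  have hcard := hP.card_eq hrs hyA
  have hNr_card := (Finset.card_le_card hNr_y).trans (Finset.card_union_le _ _)
  have hG := extremalOrder_add_le (t := t) (k := #K - 2) (by omega)
  have hG' := extremalOrder_add_two (t := t) (k := #K - 2) (by omega)
  rw [show #K - 2 + 1 = #K - 1 by omega] at hG
  rw [Nat.sub_add_cancel (by omega)] at hG'
  rw [← Finset.add_sum_erase _ _ hr, hbr]
  omega

theorem IsAdmissible.card_outerNeighbors_le (hNr_free : IsFreeOf c (outerNeighbors c A q r x) r)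
    (hfree : ∀ y ∈ outerNeighbors c A q r x, (t + 1) / 2 ≤ #(part A q y) →
      IsFreeOf c (part A q y) s) :
    #(outerNeighbors c A q r x) ≤ 2 * extremalOrder t (#K - 2) := by
  by_cases hlarge : ∃ y ∈ outerNeighbors c A q r x, (t + 1) / 2 ≤ #(part A q y)
  · obtain ⟨y, hy, hlarge⟩ := hlarge
    have hsub := hP.part_subset_outerNeighbors hx hy
    have hNr := outerNeighbors_ssubset (c := c) (q := q) (i := r) hx
    have hpart := (ih _ (hsub.trans_ssubset hNr)).card_add_sum_erase_erase_le
      (h.mono part_subset) hK hr hs hrs (hNr_free.mono hsub) (hfree y hy hlarge)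
    have hrest := h.card_le_of_isCompleteBetween_of_isFreeOf (by omega) hK ih hs hr hrs.symm
      (U := outerNeighbors c A q r x \ part A q y) (X := part A q y)
      (Finset.sdiff_subset.trans_ssubset hNr) (fun z hz v hv => by
        obtain ⟨hzN, hzy⟩ := Finset.mem_sdiff.1 (Finset.mem_coe.1 hz)
        have hzA := outerNeighbors_subset hzN
        have hne : q z ≠ q y := fun h => hzy (mem_part.2 ⟨hzA, h⟩)
        refine (hP.isCompleteBetween_part_outerNeighbors (outerNeighbors_subset hy) hv
          (mem_outerNeighbors.2 ⟨hzA, hne, ?_⟩)).symm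
        exact (hP.color_mem y (outerNeighbors_subset hy) z hzA hne.symm).resolve_left
          (hNr_free y hy z hzN fun h => hne (h ▸ rfl)))
      (by omega) (hNr_free.mono Finset.sdiff_subset)
    have hcard := Finset.card_sdiff_add_card_eq_card hsub
    omega
  · push Not at hlarge
    have := hP.card_lt_of_isFreeOf (by omega) (h.pathBounded s hs) outerNeighbors_subset hNr_free
      hlarge
    have := le_extremalOrder (t := t) (k := #K - 2) (by omega)
    omega

theorem IsAdmissible.card_add_sum_le_of_two_large_outerNeighbors
    (hpart_large : (t + 1) / 2 ≤ #(part A q x))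
    (hNr_large : (t + 1) / 2 ≤ #(outerNeighbors c A q r x))
    (hNs_large : (t + 1) / 2 ≤ #(outerNeighbors c A q s x)) :
    #A + ∑ i ∈ K, b i ≤ extremalOrder t #K := by
  have hfree {i : C} (hi : i ∈ K) (hN : (t + 1) / 2 ≤ #(outerNeighbors c A q i x)) :
      b i = 0 ∧ IsFreeOf c (part A q x) i ∧ IsFreeOf c (outerNeighbors c A q i x) i := by
    have hjoin := hP.isCompleteBetween_part_outerNeighbors (i := i) hx
    exact ⟨(h.pathBounded i hi).eq_zero_of_isCompleteBetween hjoin hpart_large (by omega),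
      h.isFreeOf_of_isCompleteBetween hi (by omega) part_subset hjoin hpart_large (by omega),
      h.isFreeOf_of_isCompleteBetween hi (by omega) outerNeighbors_subset hjoin.symm hN
        (by omega)⟩
  obtain ⟨hbr, hpart_r, hNr_free⟩ := hfree hr hNr_large
  obtain ⟨hbs, hpart_s, hNs_free⟩ := hfree hs hNs_large
  obtain ⟨z, hz⟩ : (outerNeighbors c A q r x).Nonempty := Finset.card_pos.1 (by omega)
  have hpart := (ih _ (part_ssubset_of_mem_outerNeighbors hz)).card_add_sum_erase_erase_le
    (h.mono part_subset) hK hr hs hrs hpart_r hpart_s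
  by_contra! hA
  have hNr := h.card_outerNeighbors_le ht hK ih hP hrs hr hs hx hNr_free fun y hy hlarge => by
    by_contra hy_free
    exact hA.not_ge (h.card_add_sum_le_of_not_isFreeOf_part ht hK ih hP hrs hr hs hx hbr
      (by omega) hNr_free hNs_free hy hlarge hy_free)
  have hNs := h.card_outerNeighbors_le ht hK ih hP.swap hrs.symm hs hr hx hNs_free
    fun y hy hlarge => by
      by_contra hy_free
      exact hA.not_ge (h.card_add_sum_le_of_not_isFreeOf_part ht hK ih hP.swap hrs.symm hs hr hx
        hbs (by omega) hNs_free hNr_free hy hlarge hy_free)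
  have hcard := hP.card_eq hrs hx
  have hG := extremalOrder_add_two (t := t) (k := #K - 2) (by omega)
  rw [Nat.sub_add_cancel (by omega)] at hG
  rw [← Finset.add_sum_erase _ _ hr, hbr,
    ← Finset.add_sum_erase _ _ (Finset.mem_erase.2 ⟨hrs.symm, hs⟩), hbs] at hA
  omega

omit hr hs in
theorem IsAdmissible.card_add_sum_le_of_large_part (hcut : ¬ HasMonoCut c A)
    (hlarge : (t + 1) / 2 ≤ #(part A q x)) : #A + ∑ i ∈ K, b i ≤ extremalOrder t #K := by
  have hNr := hP.outerNeighbors_nonempty hcut hx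
  have hNs := hP.swap.outerNeighbors_nonempty hcut hx
  have hr := h.mem_of_mem_outerNeighbors hx hNr.choose_spec
  have hs := h.mem_of_mem_outerNeighbors hx hNs.choose_spec
  rcases Nat.lt_or_ge (2 * #(outerNeighbors c A q r x)) t with hNr_small | hNr_large
  · rcases Nat.lt_or_ge (2 * #(outerNeighbors c A q s x)) t with hNs_small | hNs_large
    · exact h.card_add_sum_le_of_two_small_outerNeighbors ht hK ih hP hrs hr hs hx hNr hNr_small
        hNs_small
    · exact h.card_add_sum_le_of_one_small_outerNeighbors ht hK ih hP.swap hrs.symm hs hr hx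
        hlarge (by omega) hNr_small
  · rcases Nat.lt_or_ge (2 * #(outerNeighbors c A q s x)) t with hNs_small | hNs_large
    · exact h.card_add_sum_le_of_one_small_outerNeighbors ht hK ih hP hrs hr hs hx hlarge
        (by omega) hNs_small
    · exact h.card_add_sum_le_of_two_large_outerNeighbors ht hK ih hP hrs hr hs hx hlarge
        (by omega) (by omega)

end LargePart

section SmallParts

variable {V C : Type*} {G : SimpleGraph V} {c : Sym2 V → C} {A : Finset V} {K : Finset C}
  {b : C → ℕ} {r s : C} {q : V → V} {x y z : V} {t m br bs : ℕ}

theorem PathBounded.sum_degree_le_of_pos (h : PathBounded G t m) (hm : 0 < m) :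
    ∑ x ∈ A, #{y ∈ A | G.Adj x y} ≤ 2 * (t - 1 - m) * #A := by
  by_contra! hsum
  obtain ⟨S, -, ⟨v, hv⟩, hS⟩ := exists_subset_lt_degree hsum
  obtain ⟨l, -, hl, hlen⟩ := (isPathList_singleton v).exists_extension_of_le_degree hS hv
  have := h.length_add_le hm l hl
  omega

theorem PathBounded.sum_degree_le_of_triangle (h : PathBounded G t m) (hxy : G.Adj x y)
    (hyz : G.Adj y z) (hxz : G.Adj x z) (hreach : ∀ v ∈ A, G.Reachable x v) :
    ∑ x ∈ A, #{y ∈ A | G.Adj x y} ≤ 2 * (t - 1) * #A := by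
  by_contra! hsum
  obtain ⟨S, hSA, ⟨v, hv⟩, hS⟩ := exists_subset_lt_degree hsum
  obtain ⟨l, hl⟩ := exists_isPathPlusList_cons_of_reachable hxy hyz hxz (hreach v (hSA hv))
  obtain ⟨l', hll', hl', hlen⟩ := hl.1.exists_extension_of_le_degree hS hv
  have := h.length_lt l' (hl.of_suffix hll' hl')
  omega

/-- If color `r` has no triangle, then the `r`-neighbourhood of a vertex has no edge of
color `r`, so it is a complete multipartite graph in color `s`. -/
theorem IsGallaiPartition.sum_degree_le_of_cliqueFree (hP : IsGallaiPartition c A r s q)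
    (ht : 3 ≤ t) (hs : PathBounded (colorGraph c A s) t bs)
    (hsmall : ∀ x ∈ A, #(part A q x) < (t + 1) / 2) (hfree : (colorGraph c A r).CliqueFree 3) :
    ∑ x ∈ A, #{y ∈ A | (colorGraph c A r).Adj x y} ≤ 2 * (t - 1) * #A := by
  rw [mul_comm _ #A]
  refine Finset.sum_le_card_nsmul _ _ _ fun x _ => ?_
  have hsub : {y ∈ A | (colorGraph c A r).Adj x y} ⊆ A := Finset.filter_subset _ _
  have := hP.card_lt_of_isFreeOf ht hs hsub
    (fun y hy z hz hyz hcolor => by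
      obtain ⟨hyA, hxy⟩ := Finset.mem_filter.1 hy
      obtain ⟨hzA, hxz⟩ := Finset.mem_filter.1 hz
      exact hfree _ (is3Clique_triple_iff.2 ⟨hxy, hxz, hyz, hyA, hzA, hcolor⟩))
    fun y hy => hsmall y (hsub hy)
  omega

theorem IsGallaiPartition.sum_degree_le (hP : IsGallaiPartition c A r s q) (ht : 3 ≤ t)
    (hcut : ¬ HasMonoCut c A) (hr : PathBounded (colorGraph c A r) t br)
    (hs : PathBounded (colorGraph c A s) t bs)
    (hsmall : ∀ x ∈ A, #(part A q x) < (t + 1) / 2) :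
    ∑ x ∈ A, #{y ∈ A | (colorGraph c A r).Adj x y} ≤ 2 * (t - 1 - br) * #A := by
  rcases Nat.eq_zero_or_pos br with rfl | hbr
  · by_cases hfree : (colorGraph c A r).CliqueFree 3
    · exact hP.sum_degree_le_of_cliqueFree ht hs hsmall hfree
    · obtain ⟨T, hT⟩ : ∃ T, (colorGraph c A r).IsNClique 3 T := by
        simpa only [CliqueFree, not_forall, not_not] using hfree
      obtain ⟨x, y, z, hxy, hxz, hyz, -⟩ := is3Clique_iff.1 hT
      exact hr.sum_degree_le_of_triangle hxy hyz hxz (hP.connectedOn hcut x hxy.2.1)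
  · exact hr.sum_degree_le_of_pos hbr

theorem card_outerNeighbors_le_degree (hx : x ∈ A) :
    #(outerNeighbors c A q r x) ≤ #{y ∈ A | (colorGraph c A r).Adj x y} := by
  refine Finset.card_le_card fun y hy => ?_
  obtain ⟨hyA, hyx, hxy⟩ := mem_outerNeighbors.1 hy
  exact Finset.mem_filter.2 ⟨hyA, fun h => hyx (h ▸ rfl), hx, hyA, hxy⟩

theorem IsGallaiPartition.card_le_of_small_parts (hP : IsGallaiPartition c A r s q) (ht : 3 ≤ t)
    (hcut : ¬ HasMonoCut c A) (hr : PathBounded (colorGraph c A r) t br)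
    (hs : PathBounded (colorGraph c A s) t bs)
    (hsmall : ∀ x ∈ A, #(part A q x) < (t + 1) / 2) :
    #A ≤ 2 * (t - 1 - br) + 2 * (t - 1 - bs) + (t - 1) / 2 := by
  have hA : 0 < #A := Finset.card_pos.2 (hP.exists_ne.imp fun _ h => h.1)
  have hdegree : #A * (#A - (t - 1) / 2) ≤ ∑ x ∈ A, (#{y ∈ A | (colorGraph c A r).Adj x y} +
      #{y ∈ A | (colorGraph c A s).Adj x y}) := by
    refine Finset.card_nsmul_le_sum _ _ _ fun x hx => ?_
    have := hP.card_eq (hP.ne_of_not_hasMonoCut hcut) hx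
    have := hsmall x hx
    have := card_outerNeighbors_le_degree (c := c) (q := q) (r := r) hx
    have := card_outerNeighbors_le_degree (c := c) (q := q) (r := s) hx
    omega
  have hr_sum := hP.sum_degree_le ht hcut hr hs hsmall
  have hs_sum := hP.swap.sum_degree_le ht hcut hs hr hsmall
  rw [Finset.sum_add_distrib] at hdegree
  have : #A - (t - 1) / 2 ≤ 2 * (t - 1 - br) + 2 * (t - 1 - bs) := by
    refine Nat.le_of_mul_le_mul_left (hdegree.trans ?_) hA
    linarith
  omega

theorem IsAdmissible.card_add_sum_le_of_small_parts (h : IsAdmissible t c A K b) (ht : 3 ≤ t)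
    (hK : 3 ≤ #K) (hP : IsGallaiPartition c A r s q) (hcut : ¬ HasMonoCut c A)
    (hsmall : ∀ x ∈ A, #(part A q x) < (t + 1) / 2) :
    #A + ∑ i ∈ K, b i ≤ extremalOrder t #K := by
  obtain ⟨x, hx, -⟩ := hP.exists_ne
  have hrs := hP.ne_of_not_hasMonoCut hcut
  have hr := h.mem_of_mem_outerNeighbors hx (hP.outerNeighbors_nonempty hcut hx).choose_spec
  have hs := h.mem_of_mem_outerNeighbors hx (hP.swap.outerNeighbors_nonempty hcut hx).choose_spec
  have hs' : s ∈ K.erase r := Finset.mem_erase.2 ⟨hrs.symm, hs⟩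
  have hcard := hP.card_le_of_small_parts ht hcut (h.pathBounded r hr) (h.pathBounded s hs) hsmall
  have hsum := h.two_mul_sum_le ((Finset.erase_subset s _).trans (Finset.erase_subset r K))
  rw [Finset.card_erase_of_mem hs', Finset.card_erase_of_mem hr] at hsum
  have horder := mul_le_two_mul_extremalOrder (t := t) hK
  rw [show #K + 7 = #K - 1 - 1 + 9 by omega, mul_add] at horder
  have := (h.pathBounded r hr).two_mul_lt
  have := (h.pathBounded s hs).two_mul_lt
  rw [← Finset.add_sum_erase _ _ hr, ← Finset.add_sum_erase _ _ hs']
  omega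

theorem weightedBound (hG : ¬ HasRainbowTriangle c) (ht : 4 ≤ t) (A : Finset V) :
    WeightedBound t c A := by
  induction A using Finset.strongInduction with
  | H A ih =>
    intro K b h
    rcases (show #K = 1 ∨ #K = 2 ∨ 3 ≤ #K by have := h.nonempty.card_pos; omega) with hK | hK | hK
    · rw [hK, extremalOrder_one]
      exact h.card_add_sum_le_of_card_eq_one (by omega) hK
    · rw [hK, extremalOrder_two]
      exact h.card_add_sum_le_of_card_eq_two ht hK
    by_contra! hA
    have := h.seven_mul_lt hK hA
    obtain ⟨r, s, q, hP⟩ := exists_isGallaiPartition hG (A := A) (by omega)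
    refine hA.not_ge ?_
    by_cases hcut : HasMonoCut c A
    · exact h.card_add_sum_le_of_hasMonoCut (by omega) hK ih hcut
    by_cases hlarge : ∃ x ∈ A, (t + 1) / 2 ≤ #(part A q x)
    · obtain ⟨x, hx, hlarge⟩ := hlarge
      exact h.card_add_sum_le_of_large_part ht hK ih hP (hP.ne_of_not_hasMonoCut hcut) hx hcut
        hlarge
    · push Not at hlarge
      exact h.card_add_sum_le_of_small_parts (by omega) hK hP hcut hlarge

end SmallParts

section UpperBound

variable {V C : Type*} {c : Sym2 V → C} {A : Finset V} {i : C} {k t : ℕ}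

theorem hasCopyIn_pathPlus {f : Fin t → V} (hf : f.Injective)
    (hpath : ∀ a (ha : a + 1 < t), c s(f ⟨a, by omega⟩, f ⟨a + 1, ha⟩) = i)
    (htriangle : ∀ h : 2 < t, c s(f ⟨0, by omega⟩, f ⟨2, h⟩) = i) :
    HasCopyIn c i (pathPlus t) := by
  have hcolor {x y : Fin t} (h : y.val = x.val + 1 ∨ x.val = 0 ∧ y.val = 2) :
      c s(f x, f y) = i := by
    obtain ⟨x, hx⟩ := x
    obtain ⟨y, hy⟩ := y
    obtain rfl | ⟨rfl, rfl⟩ := h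
    exacts [hpath x hy, htriangle hy]
  refine ⟨f, hf, fun x y hxy => ?_⟩
  obtain h | h := ((fromRel_adj _ _ _).1 hxy).2
  · exact hcolor h
  · exact Sym2.eq_swap (a := f y) ▸ hcolor h

/-- The triangle of a path list sits at its end, so the copy of `pathPlus` is read backwards. -/
theorem IsPathPlusList.hasCopyIn {l : List V} (hl : IsPathPlusList (colorGraph c A i) l) :
    HasCopyIn c i (pathPlus l.length) := by
  obtain ⟨⟨hchain, hnodup⟩, x, y, z, hsuffix, hxz⟩ := hl
  obtain ⟨l', hl'⟩ := List.reverse_prefix.2 hsuffix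
  have hreverse : (colorGraph c A i).Adj z x ∧ l.reverse.IsChain (colorGraph c A i).Adj ∧
      l.reverse.Nodup :=
    ⟨hxz.symm, List.isChain_reverse.2 (hchain.imp fun _ _ h => h.symm), List.nodup_reverse.2 hnodup⟩
  rw [← List.length_reverse, ← hl']
  rw [← hl'] at hreverse
  obtain ⟨hzx, hchain, hnodup⟩ := hreverse
  exact hasCopyIn_pathPlus (List.nodup_iff_injective_get.1 hnodup)
    (fun a ha => (List.isChain_iff_getElem.1 hchain a ha).2.2.2) fun _ => hzx.2.2.2

theorem hasRainbowTriangle_or_hasMonoCopy_pathPlus (hk : 1 ≤ k) (ht : 4 ≤ t)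
    (c : Sym2 (Fin (extremalOrder t k + 1)) → Fin k) :
    HasRainbowTriangle c ∨ HasMonoCopy c (pathPlus t) := by
  by_contra! hc
  have : NeZero k := ⟨by omega⟩
  have hadm : IsAdmissible t c Finset.univ Finset.univ 0 :=
    { nonempty := Finset.univ_nonempty
      color_mem := fun _ _ _ _ _ => Finset.mem_univ _
      pathBounded := fun i _ =>
        { two_mul_lt := by rw [Pi.zero_apply]; omega
          length_lt := fun l hl => by
            by_contra! hlen
            have := (hl.drop (m := l.length - t) (by omega)).hasCopyIn
            rw [List.length_drop, Nat.sub_sub_self hlen] at this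
            exact hc.2 ⟨i, this⟩
          length_add_le := fun h => absurd h (lt_irrefl 0) } }
  have := weightedBound hc.1 ht _ _ _ hadm
  simp only [Finset.card_univ, Fintype.card_fin, Pi.zero_apply, Finset.sum_const_zero] at this
  omega

end UpperBound

section LowerBound

variable {V V' W C C' D α : Type*} {c : Sym2 V → C} {d : Sym2 W → D} {H : SimpleGraph α}
  {i : C} {j : D} {k l m n o t : ℕ}

/-- A Gallai coloring without a monochromatic copy of `H`. -/
def IsAvoiding (c : Sym2 V → C) (H : SimpleGraph α) : Prop :=
  ¬ HasRainbowTriangle c ∧ ¬ HasMonoCopy c H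

theorem IsAvoiding.comap (hc : IsAvoiding c H) (e : V' ↪ V) (g : C ≃ C') :
    IsAvoiding (fun z => g (c (z.map e))) H := by
  refine ⟨?_, ?_⟩
  · rintro ⟨x, y, z, hxy, hxz, hyz, h₁, h₂, h₃⟩
    exact hc.1 ⟨e x, e y, e z, e.injective.ne hxy, e.injective.ne hxz, e.injective.ne hyz,
      ne_of_apply_ne g h₁, ne_of_apply_ne g h₂, ne_of_apply_ne g h₃⟩
  · rintro ⟨i, f, hf, hcolor⟩
    exact hc.2 ⟨g.symm i, e ∘ f, e.injective.comp hf,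
      fun x y hxy => g.injective ((hcolor x y hxy).trans (g.apply_symm_apply i).symm)⟩

theorem isAvoiding_of_card_lt [Subsingleton C] [Fintype V] [Fintype α]
    (h : Fintype.card V < Fintype.card α) (c : Sym2 V → C) : IsAvoiding c H := by
  refine ⟨?_, ?_⟩
  · rintro ⟨x, y, z, -, -, -, h, -⟩
    exact h (Subsingleton.elim _ _)
  · rintro ⟨i, f, hf, -⟩
    exact h.not_ge (Fintype.card_le_of_injective f hf)

/-- The lexicographic product of two colorings: every vertex of `W` is replaced by a copy of `V`
colored by `c`, and the edges between the copies are colored by `d`. -/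
noncomputable def lexColoring (d : Sym2 W → D) (c : Sym2 V → C) : Sym2 (W × V) → C ⊕ D :=
  Sym2.lift ⟨fun p q => if p.1 = q.1 then .inl (c s(p.2, q.2)) else .inr (d s(p.1, q.1)),
    fun p q => by simp only [eq_comm, Sym2.eq_swap]⟩

theorem lexColoring_of_eq {p q : W × V} (h : p.1 = q.1) :
    lexColoring d c s(p, q) = .inl (c s(p.2, q.2)) := if_pos h

theorem lexColoring_of_ne {p q : W × V} (h : p.1 ≠ q.1) :
    lexColoring d c s(p, q) = .inr (d s(p.1, q.1)) := if_neg h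

theorem lexColoring_eq_inl {p q : W × V} :
    lexColoring d c s(p, q) = .inl i ↔ p.1 = q.1 ∧ c s(p.2, q.2) = i := by
  by_cases h : p.1 = q.1
  · simp only [lexColoring_of_eq h, Sum.inl.injEq, h, true_and]
  · simp only [lexColoring_of_ne h, reduceCtorEq, h, false_and]

theorem lexColoring_eq_inr {p q : W × V} :
    lexColoring d c s(p, q) = .inr j ↔ p.1 ≠ q.1 ∧ d s(p.1, q.1) = j := by
  by_cases h : p.1 = q.1
  · simp only [lexColoring_of_eq h, reduceCtorEq, h, ne_eq, not_true_eq_false, false_and]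
  · simp only [lexColoring_of_ne h, Sum.inr.injEq, ne_eq, h, not_false_eq_true, true_and]

theorem not_hasRainbowTriangle_lexColoring (hc : ¬ HasRainbowTriangle c)
    (hd : ¬ HasRainbowTriangle d) : ¬ HasRainbowTriangle (lexColoring d c) := by
  rintro ⟨p, q, r, hpq, hpr, hqr, h₁, h₂, h₃⟩
  have hne {p q : W × V} (hpq : p ≠ q) (h : p.1 = q.1) : p.2 ≠ q.2 :=
    fun h' => hpq (Prod.ext h h')
  by_cases hpq' : p.1 = q.1
  · by_cases hpr' : p.1 = r.1
    · have hqr' := hpq'.symm.trans hpr'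
      rw [lexColoring_of_eq hpq', lexColoring_of_eq hpr'] at h₁
      rw [lexColoring_of_eq hpq', lexColoring_of_eq hqr'] at h₂
      rw [lexColoring_of_eq hpr', lexColoring_of_eq hqr'] at h₃
      exact hc ⟨p.2, q.2, r.2, hne hpq hpq', hne hpr hpr', hne hqr hqr', ne_of_apply_ne _ h₁,
        ne_of_apply_ne _ h₂, ne_of_apply_ne _ h₃⟩
    · exact h₃ (by rw [lexColoring_of_ne hpr', lexColoring_of_ne (hpq' ▸ hpr'), hpq'])
  · by_cases hpr' : p.1 = r.1
    · refine h₂ ?_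
      rw [lexColoring_of_ne hpq', lexColoring_of_ne (hpr' ▸ Ne.symm hpq'), hpr', Sym2.eq_swap]
    · by_cases hqr' : q.1 = r.1
      · exact h₁ (by rw [lexColoring_of_ne hpq', lexColoring_of_ne hpr', hqr'])
      · rw [lexColoring_of_ne hpq', lexColoring_of_ne hpr'] at h₁
        rw [lexColoring_of_ne hpq', lexColoring_of_ne hqr'] at h₂
        rw [lexColoring_of_ne hpr', lexColoring_of_ne hqr'] at h₃
        exact hd ⟨p.1, q.1, r.1, hpq', hpr', hqr', ne_of_apply_ne _ h₁, ne_of_apply_ne _ h₂,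
          ne_of_apply_ne _ h₃⟩

/-- A connected graph in a color of `c` stays inside one copy of `V`, and an `n`-clique in a
color of `d` projects to an `n`-clique in `W`. -/
theorem IsAvoiding.lexColoring (hd : IsAvoiding d (⊤ : SimpleGraph (Fin n)))
    (hc : IsAvoiding c H) (hH : H.Preconnected) (hn : ¬ H.CliqueFree n) :
    IsAvoiding (lexColoring d c) H := by
  refine ⟨not_hasRainbowTriangle_lexColoring hc.1 hd.1, ?_⟩
  rintro ⟨i | j, f, hf, hcolor⟩
  · have hfst (a b : α) : (f a).1 = (f b).1 := by
      induction (reachable_iff_reflTransGen a b).1 (hH a b) with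
      | refl => rfl
      | tail _ hadj ih => exact ih.trans (lexColoring_eq_inl.1 (hcolor _ _ hadj)).1
    exact hc.2 ⟨i, fun a => (f a).2, fun a b hab => hf (Prod.ext (hfst a b) hab),
      fun a b hab => (lexColoring_eq_inl.1 (hcolor a b hab)).2⟩
  · obtain ⟨e⟩ := (not_cliqueFree_iff_top_isContained n).1 hn
    have hclique {a b : Fin n} (hab : a ≠ b) :=
      lexColoring_eq_inr.1 (hcolor _ _ (e.toHom.map_adj ((top_adj a b).2 hab)))
    refine hd.2 ⟨j, fun a => (f (e a)).1, fun a b hab => ?_, fun a b hab => (hclique hab.ne).2⟩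
    by_contra hne
    exact (hclique hne).1 hab

theorem exists_isAvoiding_mul {c : Sym2 (Fin m) → Fin k} {d : Sym2 (Fin l) → Fin o}
    (hd : IsAvoiding d (⊤ : SimpleGraph (Fin n))) (hc : IsAvoiding c H) (hH : H.Preconnected)
    (hn : ¬ H.CliqueFree n) : ∃ c : Sym2 (Fin (l * m)) → Fin (k + o), IsAvoiding c H :=
  ⟨_, (hd.lexColoring hc hH hn).comap finProdFinEquiv.symm.toEmbedding finSumFinEquiv⟩

/-- The coloring of `K_5` by a pentagon and its complement. -/
def pentagonColoring : Sym2 (Fin 5) → Fin 2 :=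
  Sym2.lift ⟨fun x y => if x = y + 1 ∨ y = x + 1 then 0 else 1,
    fun x y => by simp only [or_comm]⟩

theorem isAvoiding_pentagonColoring : IsAvoiding pentagonColoring (⊤ : SimpleGraph (Fin 3)) := by
  refine ⟨by unfold HasRainbowTriangle; decide, ?_⟩
  have htriangle : ∀ x y z : Fin 5, x ≠ y → x ≠ z → y ≠ z →
      ¬ (pentagonColoring s(x, y) = pentagonColoring s(x, z) ∧
        pentagonColoring s(x, y) = pentagonColoring s(y, z)) := by decide
  rintro ⟨i, f, hf, hcolor⟩
  refine htriangle (f 0) (f 1) (f 2) (hf.ne (by decide)) (hf.ne (by decide)) (hf.ne (by decide)) ?_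
  simp [hcolor]

theorem pathPlus_adj_of_val_eq {x y : Fin t} (h : y.val = x.val + 1 ∨ x.val = 0 ∧ y.val = 2) :
    (pathPlus t).Adj x y := by
  refine (fromRel_adj _ _ _).2 ⟨?_, .inl h⟩
  rintro rfl
  omega

theorem pathPlus_preconnected : (pathPlus t).Preconnected := by
  refine (pathGraph_preconnected t).mono fun x y hxy => ?_
  rcases pathGraph_adj.1 hxy with h | h
  · exact pathPlus_adj_of_val_eq (.inl h.symm)
  · exact (pathPlus_adj_of_val_eq (.inl h.symm)).symm

theorem not_cliqueFree_pathPlus (ht : 3 ≤ t) : ¬ (pathPlus t).CliqueFree 3 := by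
  refine fun h => h {⟨0, by omega⟩, ⟨1, by omega⟩, ⟨2, by omega⟩}
    (is3Clique_triple_iff.2 ⟨?_, ?_, ?_⟩)
  exacts [pathPlus_adj_of_val_eq (.inl rfl), pathPlus_adj_of_val_eq (.inr ⟨rfl, rfl⟩),
    pathPlus_adj_of_val_eq (.inl rfl)]

theorem exists_isAvoiding_extremalOrder (ht : 3 ≤ t) : ∀ {k : ℕ}, 1 ≤ k →
    ∃ c : Sym2 (Fin (extremalOrder t k)) → Fin k, IsAvoiding c (pathPlus t)
  | 1, _ => by
    rw [extremalOrder_one]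
    have hcard : Fintype.card (Fin (t - 1)) < Fintype.card (Fin t) := by
      rw [Fintype.card_fin, Fintype.card_fin]
      omega
    exact ⟨_, isAvoiding_of_card_lt hcard (fun _ => 0)⟩
  | 2, _ => by
    obtain ⟨c, hc⟩ := exists_isAvoiding_extremalOrder ht le_rfl
    rw [extremalOrder_two, ← extremalOrder_one t]
    exact exists_isAvoiding_mul (isAvoiding_of_card_lt (by decide) fun _ => (0 : Fin 1)) hc
      pathPlus_preconnected (not_cliqueFree_pathPlus ht)
  | k + 3, _ => by
    obtain ⟨c, hc⟩ := exists_isAvoiding_extremalOrder ht (Nat.succ_pos k)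
    rw [extremalOrder_add_two (Nat.succ_pos k)]
    exact exists_isAvoiding_mul (k := k + 1) isAvoiding_pentagonColoring hc pathPlus_preconnected
      (not_cliqueFree_pathPlus ht)

theorem exists_isAvoiding_pathPlus (ht : 3 ≤ t) (hk : 1 ≤ k) (hm : m ≤ extremalOrder t k) :
    ∃ c : Sym2 (Fin m) → Fin k, IsAvoiding c (pathPlus t) := by
  obtain ⟨c, hc⟩ := exists_isAvoiding_extremalOrder ht hk
  exact ⟨_, hc.comap (Fin.castLEEmb hm) (.refl _)⟩

end LowerBound

end GallaiRamsey

theorem gallaiRamsey_pathPlus_even_general (k t : ℕ) (hk : 1 ≤ k) (ht : 4 ≤ t) :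
    (∀ c : Sym2 (Fin (GallaiRamsey.extremalOrder t k + 1)) → Fin k,
      HasRainbowTriangle c ∨ HasMonoCopy c (pathPlus t)) ∧
    grK3 k (pathPlus t) = GallaiRamsey.extremalOrder t k + 1 := by
  have hupper := GallaiRamsey.hasRainbowTriangle_or_hasMonoCopy_pathPlus hk ht
  refine ⟨hupper, le_antisymm (Nat.sInf_le hupper) (le_csInf ⟨_, hupper⟩ fun m hm => ?_)⟩
  by_contra! hlt
  obtain ⟨c, hrainbow, hmono⟩ :=
    GallaiRamsey.exists_isAvoiding_pathPlus (by omega) hk (Nat.le_of_lt_succ hlt)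
  exact (hm c).elim hrainbow hmono

/-- For every even `k ≥ 2` and `t ≥ 4`, every `k`-coloring of the edges of the complete
graph on `2(t-1)·5^((k-2)/2) + 1` vertices contains a rainbow triangle or a monochromatic
copy of `P_t^+`; with the matching lower bound,
`gr_k(K_3 : P_t^+) = 2(t-1)·5^((k-2)/2) + 1`. -/
theorem gallaiRamsey_pathPlus_even (k t : ℕ) (hk : 2 ≤ k) (hke : Even k) (ht : 4 ≤ t) :
    (∀ c : Sym2 (Fin (2 * (t - 1) * 5 ^ ((k - 2) / 2) + 1)) → Fin k,
      HasRainbowTriangle c ∨ HasMonoCopy c (pathPlus t)) ∧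
    grK3 k (pathPlus t) = 2 * (t - 1) * 5 ^ ((k - 2) / 2) + 1 := by
  have horder : GallaiRamsey.extremalOrder t k = 2 * (t - 1) * 5 ^ ((k - 2) / 2) := if_pos hke
  exact horder ▸ gallaiRamsey_pathPlus_even_general k t (by omega) ht
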